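/- arXiv:1611.09060 — 3 statements merged into one kernel-verified Lean document; each statement's English description precedes it below -/
import Mathlib

section
/- Let H be a finite simple graph with tree-depth exactly 3 such that at most one connected component of H has tree-depth 3. Then there exists an integer d such that every finite simple graph with no H minor is (2, d)-colourable; moreover, for every integer d there exists a finite simple graph with no H minor that is not (1, d)-colourable. In other words, the defective chromatic number of the class of H-minor-free graphs equals 2. -/
/-!
Upper bound. A graph `H` as in the statement with `n` vertices is a subgraph of `Hlk n n`: deleting
the root of the component of tree-depth 3 leaves a forest of stars (`isMinor_hlk`). So it suffices
to 2-colour graphs `G` without `Hlk l k` minor with bounded defect (`exists_defColorable`).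

Such graphs have bounded density, by contracting a maximal connected set along which the density
does not drop (`sparse`). The colouring is found by a reduction on a minor `G'` of `G` whose
vertices stand for *clumps*: vertex sets that will be monochromatic. Initially `G' = G` and the
clumps are single vertices. Isolated vertices of `G'` and edges of `G'` between two vertices of low
degree may be deleted. If neither exists, then sparsity of the minors of `G` yields many low degree
vertices of `G'` with exactly the same small neighbourhood `S` (`counting`). The clumps in `S` are
merged into one, and all these low degree vertices are deleted; they will receive the colour
opposite to that of the merged clump, so none of their edges of `G'` is monochromatic
(`Stage.good_merge`).

It remains to see that a vertex `x` has few neighbours in a clump, so that a bounded number of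
adjacent clumps causes a bounded defect (`Clump.ncard_neighbors_le`). Any two parts merged into a
clump are joined by many disjoint connected sets, namely deleted low degree vertices. If `x` had
more than `2 * l` neighbours in the clump, the clump would decompose into more than `2 * l`
connected blocks, each containing a neighbour of `x`, on two sides, such that each block has
`k + 1` private connected sets joining it to blocks of the other side. Taking `l` blocks on the same
side as star centres, and `x` with all other blocks as dominant vertex, gives an `Hlk l k` minor.

Lower bound. Minors of stars have tree-depth at most 2, whereas the star with `d + 1` leaves is not
`(1, d)`-colourable (`lower_bound`).
-/

open SimpleGraph

universe u v

section Defs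

variable {V : Type u} {α : Type v}

/-- `H` is isomorphic to a subgraph of `G`: there is an injective graph homomorphism. -/
def ContainsSubgraph (G : SimpleGraph V) (H : SimpleGraph α) : Prop :=
  ∃ f : H →g G, Function.Injective f

/-- `G` is `(k,d)`-choosable: for every assignment of lists of exactly `k` colours there is a
colouring from the lists in which every vertex has at most `d` neighbours of its own colour. -/
def Choosable (G : SimpleGraph V) (k : ℕ) (d : ℤ) : Prop :=
  ∀ L : V → Finset ℕ, (∀ v, (L v).card = k) →
    ∃ c : V → ℕ, (∀ v, c v ∈ L v) ∧
      ∀ v, (({w | G.Adj v w ∧ c w = c v}.ncard : ℤ)) ≤ d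

/-- `G` is `(k,d)`-colourable: the vertices can be `k`-coloured with every vertex having at most
`d` neighbours of its own colour. -/
def DefColorable (G : SimpleGraph V) (k d : ℕ) : Prop :=
  ∃ c : V → Fin k, ∀ v, {w | G.Adj v w ∧ c w = c v}.ncard ≤ d

/-- `H` is a minor of `G`, via pairwise disjoint connected branch sets. -/
def IsMinor (H : SimpleGraph α) (G : SimpleGraph V) : Prop :=
  ∃ B : α → Set V,
    (∀ a, (B a).Nonempty) ∧
    (∀ a, (G.induce (B a)).Connected) ∧
    (Pairwise fun a b => Disjoint (B a) (B b)) ∧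
    (∀ a b, H.Adj a b → ∃ x ∈ B a, ∃ y ∈ B b, G.Adj x y)

/-- A subdivision of `H` whose path lengths all satisfy `lenOK` occurs as a subgraph of `G`:
the branch vertices are embedded injectively by `f`, each edge of `H` is replaced by a path of
`G` between the corresponding branch vertices, internal vertices of these paths avoid branch
vertices, and distinct paths meet only in common endpoints. -/
def HasSubdivWith (G : SimpleGraph V) (H : SimpleGraph α) (lenOK : ℕ → Prop) : Prop :=
  ∃ f : α → V, Function.Injective f ∧
    ∃ P : ∀ ⦃a b : α⦄, H.Adj a b → G.Walk (f a) (f b),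
      (∀ ⦃a b⦄ (h : H.Adj a b), (P h).IsPath ∧ lenOK (P h).length) ∧
      (∀ ⦃a b⦄ (h : H.Adj a b) (c : α), f c ∈ (P h).support → c = a ∨ c = b) ∧
      (∀ ⦃a b⦄ (h : H.Adj a b) ⦃a' b'⦄ (h' : H.Adj a' b'), s(a, b) ≠ s(a', b') →
        ∀ x ∈ (P h).support, x ∈ (P h').support →
          (x = f a ∨ x = f b) ∧ (x = f a' ∨ x = f b'))

/-- Some `(≤ k)`-subdivision of `H` (each edge replaced by a path of length at most `k+1`)
is a subgraph of `G`. -/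
def HasSubdivLE (G : SimpleGraph V) (k : ℕ) (H : SimpleGraph α) : Prop :=
  HasSubdivWith G H fun L => L ≤ k + 1

/-- `H` is a topological minor of `G`: some subdivision of `H` is a subgraph of `G`. -/
def HasTopMinor (G : SimpleGraph V) (H : SimpleGraph α) : Prop :=
  HasSubdivWith G H fun _ => True

/-- The exact `1`-subdivision of `H`: every edge is subdivided exactly once. -/
def exactOneSubdivision (H : SimpleGraph α) : SimpleGraph (α ⊕ H.edgeSet) :=
  SimpleGraph.fromRel fun x y =>
    match x, y with
    | Sum.inl a, Sum.inr e => a ∈ (e : Sym2 α)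
    | _, _ => False

/-- The graph `K*_{s,t}`: `K_{s,t}` together with `binom s 2` new vertices, each adjacent to a
distinct pair of vertices on the side of size `s`. -/
def KstarGraph (s t : ℕ) :
    SimpleGraph (Fin s ⊕ (Fin t ⊕ {p : Fin s × Fin s // p.1 < p.2})) :=
  SimpleGraph.fromRel fun x y =>
    match x, y with
    | Sum.inl _, Sum.inr (Sum.inl _) => True
    | Sum.inl a, Sum.inr (Sum.inr c) => a = c.1.1 ∨ a = c.1.2
    | _, _ => False

/-- The auxiliary function `N₁(s,t,δ,δ₁)`. -/
noncomputable def N1 (s t : ℕ) (δ δ₁ : ℝ) : ℝ :=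
  if s = 1 then (t : ℝ) - 1
  else if s = 2 then (δ - 2) * δ₁ * t / 2 + δ
  else (δ - s) * ((Nat.choose ⌊δ₁⌋₊ (s - 1) : ℝ) * ((t : ℝ) - 1) + δ₁ / 2) + δ

/-- The maximum average degree of `G`: maximum of `2|E(H)|/|V(H)|` over nonempty subgraphs. -/
noncomputable def mad [Fintype V] (G : SimpleGraph V) : ℝ :=
  sSup {q : ℝ | ∃ H : G.Subgraph, H.verts.Nonempty ∧
    q = 2 * (H.edgeSet.ncard : ℝ) / (H.verts.ncard : ℝ)}

/-- `∇₀(G)`: maximum of `|E(H)|/|V(H)|` over nonempty subgraphs of `G`. -/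
noncomputable def nabla0 [Fintype V] (G : SimpleGraph V) : ℝ :=
  sSup {q : ℝ | ∃ H : G.Subgraph, H.verts.Nonempty ∧
    q = (H.edgeSet.ncard : ℝ) / (H.verts.ncard : ℝ)}

/-- `∇₁(G)`: maximum of `|E(H)|/|V(H)|` over graphs `H` some `(≤2)`-subdivision of which is a
subgraph of `G`. -/
noncomputable def nabla1 [Fintype V] (G : SimpleGraph V) : ℝ :=
  sSup {q : ℝ | ∃ (n : ℕ) (H : SimpleGraph (Fin n)), 0 < n ∧
    HasSubdivLE G 2 H ∧ q = (H.edgeSet.ncard : ℝ) / (n : ℝ)}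

end Defs

/-- The vertex type of the graph `G(s,N)` (here indexed by `t = s - 2`). -/
def GVert : ℕ → ℕ → Type
  | 0, N => Fin (N + 2)
  | t + 1, N => Option (Fin (N + 1) × GVert t N)

/-- The graph `G(s,N)` (indexed by `t = s - 2`): `GGraph 0 N = G(2,N) = K_{1,N+1}`, and
`GGraph (t+1) N = G(t+3,N)` is obtained from `N+1` disjoint copies of `GGraph t N` by adding
a dominant vertex. -/
def GGraph : (t : ℕ) → (N : ℕ) → SimpleGraph (GVert t N)
  | 0, N => SimpleGraph.fromRel fun i j => i = (0 : Fin (N + 2))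
  | t + 1, N => SimpleGraph.fromRel fun x y =>
      match x, y with
      | none, some _ => True
      | some (i, a), some (j, b) => i = j ∧ (GGraph t N).Adj a b
      | _, _ => False

section More

variable {V : Type u} {α : Type v}

/-- `r` is a forest order witnessing that `H` is a subgraph of the closure of a rooted forest:
`r` is a partial order in which the set of ancestors of each vertex is a chain, and adjacent
vertices of `H` are comparable. -/
def IsForestOrder (H : SimpleGraph α) (r : α → α → Prop) : Prop :=
  IsPartialOrder α r ∧ (∀ v : α, IsChain r {u | r u v}) ∧
    (∀ x y, H.Adj x y → r x y ∨ r y x)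

/-- The tree-depth of `H`: the minimum height of a rooted forest whose closure contains `H`
as a subgraph (the height being measured as the maximum number of vertices on a
root--to--leaf path). -/
noncomputable def treeDepth (H : SimpleGraph α) : ℕ :=
  sInf {k | ∃ r : α → α → Prop, IsForestOrder H r ∧ ∀ v, {u | r u v}.ncard ≤ k}

/-- The vertex cover number `τ(H)`. -/
noncomputable def vertexCoverNumber (H : SimpleGraph α) : ℕ :=
  sInf {k | ∃ S : Set α, S.ncard = k ∧ ∀ ⦃x y⦄, H.Adj x y → x ∈ S ∨ y ∈ S}

/-- The graph obtained from `ℓ` disjoint copies of the star `K_{1,k}` by adding one dominant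
vertex. -/
def Hlk (l k : ℕ) : SimpleGraph (Option (Fin l × Fin (k + 1))) :=
  SimpleGraph.fromRel fun x y =>
    match x, y with
    | none, some _ => True
    | some (i, a), some (j, _) => i = j ∧ a = 0
    | _, _ => False

/-- The star `K_{1,k}` together with `m` isolated vertices. -/
def StarPlusIsolated (k m : ℕ) : SimpleGraph (Fin (k + 1) ⊕ Fin m) :=
  SimpleGraph.fromRel fun x y =>
    match x, y with
    | Sum.inl i, Sum.inl _ => i = 0
    | _, _ => False

/-- `G` admits a `k`-stack layout: a linear ordering of the vertices (given by an injection
into `ℕ`) and an assignment of the edges to `k` stacks so that no two edges in a common stack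
cross. -/
def HasStackLayout (G : SimpleGraph V) (k : ℕ) : Prop :=
  ∃ f : V → ℕ, Function.Injective f ∧
    ∃ σ : Sym2 V → Fin k,
      ∀ a b c d : V, G.Adj a b → G.Adj c d → σ s(a, b) = σ s(c, d) →
        ¬(f a < f c ∧ f c < f b ∧ f b < f d)

/-- `G` admits a `k`-queue layout: a linear ordering of the vertices (given by an injection
into `ℕ`) and an assignment of the edges to `k` queues so that no two edges in a common queue
are nested. -/
def HasQueueLayout (G : SimpleGraph V) (k : ℕ) : Prop :=
  ∃ f : V → ℕ, Function.Injective f ∧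
    ∃ σ : Sym2 V → Fin k,
      ∀ a b c d : V, G.Adj a b → G.Adj c d → σ s(a, b) = σ s(c, d) →
        ¬(f a < f c ∧ f c < f d ∧ f d < f b)

end More

namespace DefectiveTwo

/-! ### Connected sets, touching sets and minors -/

/-- The vertex set `s` induces a (nonempty) connected subgraph of `G`. -/
def Conn {V : Type} (G : SimpleGraph V) (s : Set V) : Prop := (G.induce s).Connected

/-- Some edge of `G` joins a vertex of `s` to a vertex of `t`. -/
def Touch {V : Type} (G : SimpleGraph V) (s t : Set V) : Prop := ∃ x ∈ s, ∃ y ∈ t, G.Adj x y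

section Basics

variable {V : Type} {G : SimpleGraph V}

lemma Conn.nonempty {s : Set V} (h : Conn G s) : s.Nonempty := by
  obtain ⟨v⟩ := SimpleGraph.Connected.nonempty h
  exact ⟨v.1, v.2⟩

lemma Touch.symm {s t : Set V} (h : Touch G s t) : Touch G t s := by
  obtain ⟨x, hx, y, hy, h⟩ := h
  exact ⟨y, hy, x, hx, h.symm⟩

lemma Touch.mono {s t s' t' : Set V} (h : Touch G s t) (hs : s ⊆ s') (ht : t ⊆ t') :
    Touch G s' t' := by
  obtain ⟨x, hx, y, hy, h⟩ := h
  exact ⟨x, hs hx, y, ht hy, h⟩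

lemma conn_singleton (v : V) : Conn G {v} := by
  unfold Conn
  have : Subsingleton ({v} : Set V) := by
    constructor; rintro ⟨a, ha⟩ ⟨b, hb⟩
    exact Subtype.ext (ha.trans hb.symm)
  have : Nonempty ({v} : Set V) := ⟨⟨v, rfl⟩⟩
  exact ⟨Preconnected.of_subsingleton⟩

lemma Conn.union_touch {s t : Set V} (hs : Conn G s) (ht : Conn G t) (h : Touch G s t) :
    Conn G (s ∪ t) := by
  obtain ⟨x, hx, y, hy, h⟩ := h
  exact connected_induce_union hs.preconnected ht.preconnected hx hy h

lemma conn_of_patches {s : Set V} (u : V) (hu : u ∈ s)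
    (h : ∀ v ∈ s, ∃ s' ⊆ s, Conn G s' ∧ u ∈ s' ∧ v ∈ s') : Conn G s := by
  refine induce_connected_of_patches u hu fun {v} hv => ?_
  obtain ⟨s', h1, h2, h3, h4⟩ := h v hv
  exact ⟨s', h1, h3, h4, h2.preconnected _ _⟩

lemma Conn.star {ι : Type*} {X : Set V} (hX : Conn G X) (I : Set ι) (s : ι → Set V)
    (hs : ∀ i ∈ I, Conn G (s i)) (ht : ∀ i ∈ I, Touch G X (s i)) :
    Conn G (X ∪ ⋃ i ∈ I, s i) := by
  obtain ⟨u, hu⟩ := hX.nonempty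
  refine conn_of_patches u (Or.inl hu) fun v hv => ?_
  rcases hv with hv | hv
  · exact ⟨X, Set.subset_union_left, hX, hu, hv⟩
  · simp only [Set.mem_iUnion] at hv
    obtain ⟨i, hi, hv⟩ := hv
    exact ⟨X ∪ s i, Set.union_subset_union_right _ (Set.subset_biUnion_of_mem hi),
      hX.union_touch (hs i hi) (ht i hi), Or.inl hu, Or.inr hv⟩

/-- Replacing the vertices of a connected set by pairwise suitably touching connected sets gives
a connected set. -/
lemma Conn.biUnion {α : Type} {H : SimpleGraph α} {S : Set α} (hS : Conn H S) (B : α → Set V)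
    (hB : ∀ a ∈ S, Conn G (B a)) (hT : ∀ a ∈ S, ∀ b ∈ S, H.Adj a b → Touch G (B a) (B b)) :
    Conn G (⋃ a ∈ S, B a) := by
  obtain ⟨a0, ha0⟩ := hS.nonempty
  obtain ⟨u, hu⟩ := (hB a0 ha0).nonempty
  refine conn_of_patches u (Set.mem_biUnion ha0 hu) fun v hv => ?_
  simp only [Set.mem_iUnion] at hv
  obtain ⟨a, ha, hv⟩ := hv
  have key : ∀ (x y : S), (H.induce S).Walk x y →
      ∃ s' ⊆ ⋃ a ∈ S, B a, Conn G s' ∧ B x ⊆ s' ∧ B y ⊆ s' := by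
    intro x y w
    induction w with
    | nil => exact ⟨B _, Set.subset_biUnion_of_mem (Subtype.prop _), hB _ (Subtype.prop _),
        subset_rfl, subset_rfl⟩
    | @cons x y z h p ih =>
      obtain ⟨s', h1, h2, h3, h4⟩ := ih
      refine ⟨B x ∪ s', Set.union_subset (Set.subset_biUnion_of_mem x.2) h1, ?_,
        Set.subset_union_left, h4.trans Set.subset_union_right⟩
      exact (hB x x.2).union_touch h2 ((hT x x.2 y y.2 h).mono subset_rfl h3)
  obtain ⟨w⟩ := hS.preconnected ⟨a0, ha0⟩ ⟨a, ha⟩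
  obtain ⟨s', h1, h2, h3, h4⟩ := key _ _ w
  exact ⟨s', h1, h2, h3 hu, h4 hv⟩

lemma isMinor_trans {α β : Type} {A : SimpleGraph α} {B : SimpleGraph β}
    (h1 : IsMinor A B) (h2 : IsMinor B G) : IsMinor A G := by
  obtain ⟨S, -, hS, hSd, hSt⟩ := h1
  obtain ⟨T, -, hT, hTd, hTt⟩ := h2
  have hc : ∀ a, Conn G (⋃ b ∈ S a, T b) := fun a =>
    Conn.biUnion (H := B) (hS a) T (fun b _ => hT b) (fun a _ b _ h => hTt a b h)
  refine ⟨fun a => ⋃ b ∈ S a, T b, fun a => (hc a).nonempty, hc, ?_, ?_⟩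
  · intro a a' haa
    simp only [Set.disjoint_iUnion_left, Set.disjoint_iUnion_right]
    intro b hb b' hb'
    refine hTd ?_
    rintro rfl
    exact Set.disjoint_left.1 (hSd haa) ‹_› ‹_›
  · intro a a' h
    obtain ⟨x, hx, y, hy, h⟩ := hSt a a' h
    obtain ⟨u, hu, v, hv, h⟩ := hTt x y h
    exact ⟨u, Set.mem_biUnion hx hu, v, Set.mem_biUnion hy hv, h⟩

lemma isMinor_of_hom {α β : Type} {A : SimpleGraph α} {B : SimpleGraph β} (f : α → β)
    (hf : Function.Injective f) (h : ∀ a b, A.Adj a b → B.Adj (f a) (f b)) : IsMinor A B := by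
  refine ⟨fun a => {f a}, fun a => ⟨_, rfl⟩, fun a => conn_singleton _, ?_, ?_⟩
  · intro a b hab
    simpa using fun h => hab (hf h)
  · intro a b hab
    exact ⟨_, rfl, _, rfl, h a b hab⟩

/-- Sufficient condition for an `Hlk l k` minor: a connected set `X` for the dominant vertex, and
for every `i` a connected set `S i 0` for the centre of the `i`-th star together with `k` connected
sets `S i a`, `a ≠ 0`, for its leaves. -/
lemma hlk_of {l k : ℕ} {X : Set V} {S : Fin l → Fin (k + 1) → Set V} (hX : Conn G X)
    (hS : ∀ i a, Conn G (S i a)) (hd : ∀ i a, Disjoint X (S i a))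
    (hdd : ∀ i a j b, (i, a) ≠ (j, b) → Disjoint (S i a) (S j b))
    (hT : ∀ i a, Touch G X (S i a)) (hTT : ∀ i a, a ≠ 0 → Touch G (S i 0) (S i a)) :
    IsMinor (Hlk l k) G := by
  have hc : ∀ a : Option (Fin l × Fin (k + 1)), Conn G (a.elim X fun p => S p.1 p.2) := by
    rintro (_ | ⟨i, a⟩)
    · exact hX
    · exact hS i a
  refine ⟨fun a => a.elim X fun p => S p.1 p.2, fun a => (hc a).nonempty, hc, ?_, ?_⟩
  · rintro (_ | ⟨i, a⟩) (_ | ⟨j, b⟩) h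
    · exact absurd rfl h
    · exact hd j b
    · exact (hd i a).symm
    · exact hdd i a j b fun h' => h (congrArg some h')
  · rintro (_ | ⟨i, a⟩) (_ | ⟨j, b⟩) h
    · exact absurd h (SimpleGraph.irrefl _)
    · exact hT j b
    · exact (hT i a).symm
    · simp only [Hlk, fromRel_adj] at h
      obtain ⟨h0, ⟨rfl, rfl⟩ | ⟨rfl, rfl⟩⟩ := h
      · exact hTT _ _ fun (hb : _ = (0 : Fin (k + 1))) => h0 (congrArg (fun z => some (_, z)) hb.symm)
      · exact (hTT _ _ fun (hb : _ = (0 : Fin (k + 1))) => h0 (congrArg (fun z => some (_, z)) hb)).symm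

end Basics

/-! ### Stars have no minor of tree-depth 3 -/

lemma lower_bound {α : Type} [Fintype α] (H : SimpleGraph α) (h3 : treeDepth H = 3) (d : ℕ) :
    ∃ (W : Type) (_ : Fintype W) (G : SimpleGraph W),
        ¬ IsMinor H G ∧ ¬ DefColorable G 1 d := by
  refine ⟨Fin (d + 2), inferInstance, SimpleGraph.fromRel fun i _ => i = 0, ?_, ?_⟩
  · rintro ⟨B, -, -, hd, ht⟩
    have huniq : ∀ a b, 0 ∈ B a → 0 ∈ B b → a = b := by
      intro a b ha hb
      by_contra hab
      exact Set.disjoint_left.1 (hd hab) ha hb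
    have h2 : treeDepth H ≤ 2 := by
      -- the vertex whose branch set contains the centre of the star is the only possible root
      refine Nat.sInf_le ⟨fun u v => u = v ∨ 0 ∈ B u, ⟨?_, ?_, ?_⟩, ?_⟩
      · refine { refl := fun a => Or.inl rfl, trans := ?_, antisymm := ?_ }
        · rintro a b c (rfl | h) (rfl | h') <;> simp_all
        · rintro a b (rfl | h) (h' | h')
          · rfl
          · rfl
          · exact h'.symm
          · exact huniq a b h h'
      · rintro v a (rfl | ha) b (rfl | hb) hab
        · exact absurd rfl hab
        · exact Or.inr (Or.inr hb)
        · exact Or.inl (Or.inr ha)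
        · exact absurd (huniq a b ha hb) hab
      · intro x y hxy
        obtain ⟨u, hu, v, hv, h⟩ := ht x y hxy
        rw [fromRel_adj] at h
        obtain ⟨-, rfl | rfl⟩ := h
        · exact Or.inl (Or.inr hu)
        · exact Or.inr (Or.inr hv)
      · intro v
        by_cases h : ∃ a, 0 ∈ B a
        · obtain ⟨a, ha⟩ := h
          have : {u | u = v ∨ 0 ∈ B u} ⊆ {v, a} := by
            rintro u (rfl | hu)
            · simp
            · simp [huniq u a hu ha]
          exact (Set.ncard_le_ncard this (Set.toFinite _)).trans (by
            have := Set.ncard_insert_le v {a}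
            rwa [Set.ncard_singleton] at this)
        · push Not at h
          simp [h]
    omega
  · rintro ⟨c, hc⟩
    have h0 := hc 0
    have hset : {w | (SimpleGraph.fromRel fun (i : Fin (d + 2)) (_ : Fin (d + 2)) => i = 0).Adj 0 w
        ∧ c w = c 0} = Set.range (Fin.succ : Fin (d + 1) → Fin (d + 2)) := by
      ext w
      simp only [fromRel_adj, Set.mem_ofPred_eq, Set.mem_range]
      constructor
      · rintro ⟨⟨h, -⟩, -⟩
        exact ⟨w.pred h.symm, by simp⟩
      · rintro ⟨j, rfl⟩
        exact ⟨⟨(Fin.succ_ne_zero j).symm, Or.inl trivial⟩, Subsingleton.elim _ _⟩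
    rw [hset, ← Set.image_univ, Set.ncard_image_of_injective _ (Fin.succ_injective _),
      Set.ncard_univ, Nat.card_fin] at h0
    omega

/-! ### A graph with at most one component of tree-depth 3 is a subgraph of some `Hlk n n` -/

section Forest

variable {α : Type} {H : SimpleGraph α} {r : α → α → Prop}

/-- A vertex set `X` whose removal leaves height at most two leaves a forest of stars; `p` sends
every vertex to the centre of its star. -/
lemma exists_star_map [Finite α] (h : IsForestOrder H r) (X : Set α)
    (hX : ∀ v, v ∉ X → ({u | r u v} \ X).ncard ≤ 2) :
    ∃ p : α → α, ∀ u v, H.Adj u v → u ∉ X → v ∉ X → p u = p v ∧ (u = p u ∨ v = p v) := by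
  classical
  obtain ⟨hpo, -, hadj⟩ := h
  have three : ∀ v a b, v ∉ X → a ∉ X → b ∉ X → r a v → r b v → a ≠ v → b ≠ v → a = b := by
    intro v a b hv ha hb hav hbv hne hne'
    by_contra hab
    have hsub : ({a, b, v} : Set α) ⊆ {u | r u v} \ X := by
      rintro u (rfl | rfl | rfl)
      · exact ⟨hav, ha⟩
      · exact ⟨hbv, hb⟩
      · exact ⟨hpo.refl _, hv⟩
    have h1 := Set.ncard_le_ncard hsub (Set.toFinite _)
    rw [Set.ncard_eq_three.2 ⟨a, b, v, hab, hne, hne', rfl⟩] at h1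
    have := hX v hv
    omega
  let p : α → α := fun v => if h : ∃ u, u ∉ X ∧ r u v ∧ u ≠ v then h.choose else v
  have key : ∀ u v, u ∉ X → v ∉ X → r u v → u ≠ v → p v = u ∧ p u = u := by
    intro u v hu hv huv hne
    constructor
    · have hex : ∃ u, u ∉ X ∧ r u v ∧ u ≠ v := ⟨u, hu, huv, hne⟩
      simp only [p, dif_pos hex]
      exact three v _ _ hv hex.choose_spec.1 hu hex.choose_spec.2.1 huv hex.choose_spec.2.2 hne
    · simp only [p]
      rw [dif_neg]
      rintro ⟨w, hw, hwu, hne'⟩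
      refine hne' (three v w u hv hw hu (hpo.trans _ _ _ hwu huv) huv ?_ hne)
      rintro rfl
      exact hne (hpo.antisymm _ _ huv hwu)
  refine ⟨p, fun u v huv hu hv => ?_⟩
  rcases hadj u v huv with h | h
  · obtain ⟨h1, h2⟩ := key u v hu hv h huv.ne
    exact ⟨h2.trans h1.symm, Or.inl h2.symm⟩
  · obtain ⟨h1, h2⟩ := key v u hv hu h huv.ne'
    exact ⟨h1.trans h2.symm, Or.inr h2.symm⟩

lemma exists_root [Finite α] (h : IsForestOrder H r) (hH : H.Connected) : ∃ ρ, ∀ v, r ρ v := by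
  obtain ⟨hpo, hch, hadj⟩ := h
  have hmin : ∀ v, ∃ m, r m v ∧ ∀ u, r u m → u = m := by
    intro v
    obtain ⟨m, hm, hmin⟩ := Set.exists_min_image {u | r u v} (fun u => {w | r w u}.ncard)
      (Set.toFinite _) ⟨v, hpo.refl v⟩
    refine ⟨m, hm, fun u hu => ?_⟩
    by_contra hne
    have hlt : {w | r w u}.ncard < {w | r w m}.ncard := by
      refine Set.ncard_lt_ncard ⟨fun w hw => hpo.trans _ _ _ hw hu, fun hsub => ?_⟩ (Set.toFinite _)
      exact hne (hpo.antisymm _ _ hu (hsub (hpo.refl m)))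
    exact absurd (hmin u (hpo.trans _ _ _ hu hm)) (not_le.2 hlt)
  choose m hm hmm using hmin
  have huniq : ∀ v a b, r a v → r b v → (∀ u, r u a → u = a) → (∀ u, r u b → u = b) → a = b := by
    intro v a b ha hb ha' hb'
    by_contra hab
    rcases hch v ha hb hab with h | h
    · exact hab (hb' _ h)
    · exact hab (ha' _ h).symm
  have hstep : ∀ x y, H.Adj x y → m x = m y := by
    intro x y hxy
    rcases hadj x y hxy with h | h
    · exact huniq y _ _ (hpo.trans _ _ _ (hm x) h) (hm y) (hmm x) (hmm y)
    · exact huniq x _ _ (hm x) (hpo.trans _ _ _ (hm y) h) (hmm x) (hmm y)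
  have hwalk : ∀ x y, H.Walk x y → m x = m y := by
    intro x y w
    induction w with
    | nil => rfl
    | cons h _ ih => exact (hstep _ _ h).trans ih
  obtain ⟨v0⟩ := hH.nonempty
  refine ⟨m v0, fun v => ?_⟩
  obtain ⟨w⟩ := hH.preconnected v0 v
  rw [hwalk _ _ w]
  exact hm v

lemma treeDepth_spec {k : ℕ} (h : IsForestOrder H r) (hk : ∀ v, {u | r u v}.ncard ≤ k) :
    treeDepth H ≤ k ∧ ∃ r', IsForestOrder H r' ∧ ∀ v, {u | r' u v}.ncard ≤ treeDepth H :=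
  ⟨Nat.sInf_le ⟨r, h, hk⟩,
    Nat.sInf_mem (s := {k | ∃ r, IsForestOrder H r ∧ ∀ v, {u | r u v}.ncard ≤ k}) ⟨k, r, h, hk⟩⟩

lemma forestOrder_restrict (h : IsForestOrder H r) (s : Set α) :
    IsForestOrder (H.induce s) (fun a b => r a.1 b.1) := by
  obtain ⟨hpo, hch, hadj⟩ := h
  refine ⟨{ refl := fun a => hpo.refl _, trans := fun a b c => hpo.trans _ _ _,
            antisymm := fun a b h h' => Subtype.ext (hpo.antisymm _ _ h h') }, ?_, ?_⟩
  · intro v a ha b hb hab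
    exact hch v.1 ha hb fun h => hab (Subtype.ext h)
  · intro x y hxy
    exact hadj _ _ hxy

end Forest

lemma exists_apex_star_map {α : Type} [Fintype α] (H : SimpleGraph α)
    (h3 : treeDepth H = 3)
    (hcomp : ∀ c c' : H.ConnectedComponent,
      treeDepth (H.induce c.supp) = 3 → treeDepth (H.induce c'.supp) = 3 → c = c') :
    ∃ (X : Set α) (p : α → α), X.Subsingleton ∧
      ∀ u v, H.Adj u v → u ∉ X → v ∉ X → p u = p v ∧ (u = p u ∨ v = p v) := by
  obtain ⟨r, hr, hr3⟩ : ∃ r, IsForestOrder H r ∧ ∀ v, {u | r u v}.ncard ≤ 3 := by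
    have := Nat.sInf_mem (Nat.nonempty_of_pos_sInf
      (s := {k | ∃ r, IsForestOrder H r ∧ ∀ v, {u | r u v}.ncard ≤ k})
      (by change 0 < treeDepth H; omega))
    change treeDepth H ∈ _ at this
    rwa [h3] at this
  have hcs : ∀ c : H.ConnectedComponent, ∃ (X : Set c.supp) (p : c.supp → c.supp),
      X.Subsingleton ∧ (X.Nonempty → treeDepth (H.induce c.supp) = 3) ∧
      ∀ u v, (H.induce c.supp).Adj u v → u ∉ X → v ∉ X → p u = p v ∧ (u = p u ∨ v = p v) := by
    intro c
    obtain ⟨hle, r', hr', hr3'⟩ := treeDepth_spec (k := 3) (forestOrder_restrict hr c.supp) (by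
      intro v
      refine le_trans ?_ (hr3 v.1)
      rw [← Set.ncard_image_of_injective _ Subtype.val_injective]
      refine Set.ncard_le_ncard ?_ (Set.toFinite _)
      rintro _ ⟨u, hu, rfl⟩
      exact hu)
    by_cases h : treeDepth (H.induce c.supp) = 3
    · obtain ⟨ρ, hρ⟩ := exists_root hr' c.connected_toSimpleGraph
      obtain ⟨p, hp⟩ := exists_star_map hr' {ρ} (by
        intro v _
        have := Set.ncard_sdiff_singleton_add_one (s := {u | r' u v}) (a := ρ) (hρ v)
          (Set.toFinite _)
        have := hr3' v
        omega)
      exact ⟨{ρ}, p, Set.subsingleton_singleton, fun _ => h, hp⟩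
    · obtain ⟨p, hp⟩ := exists_star_map hr' ∅ (by
        intro v _
        have := hr3' v
        simp only [Set.sdiff_empty]
        omega)
      exact ⟨∅, p, Set.subsingleton_empty, fun h => absurd h (by simp), hp⟩
  choose X p hX hX3 hp using hcs
  refine ⟨{v | (⟨v, rfl⟩ : (H.connectedComponentMk v).supp) ∈ X (H.connectedComponentMk v)},
    fun v => (p (H.connectedComponentMk v) ⟨v, rfl⟩).1, ?_, ?_⟩
  · intro u hu v hv
    have hc := hcomp _ _ (hX3 _ ⟨_, hu⟩) (hX3 _ ⟨_, hv⟩)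
    have hu' : ∀ c, ∀ hc : H.connectedComponentMk u = c, (⟨u, hc⟩ : c.supp) ∈ X c := by
      rintro _ rfl; exact hu
    exact congrArg Subtype.val (hX _ (hu' _ hc) hv)
  · intro u v huv hu hv
    have hc : H.connectedComponentMk u = H.connectedComponentMk v :=
      ConnectedComponent.sound huv.reachable
    have hu' : ∀ c, ∀ hc : H.connectedComponentMk u = c, (⟨u, hc⟩ : c.supp) ∉ X c ∧
        (p (H.connectedComponentMk u) ⟨u, rfl⟩).1 = (p c ⟨u, hc⟩).1 := by
      rintro _ rfl; exact ⟨hu, rfl⟩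
    obtain ⟨h1, h2⟩ := hu' _ hc
    obtain ⟨h3, h4⟩ := hp _ ⟨u, hc⟩ ⟨v, rfl⟩ huv h1 hv
    dsimp only
    rw [h2, h3]
    rw [h3] at h4
    refine ⟨rfl, ?_⟩
    rcases h4 with h | h
    · exact Or.inl (congrArg Subtype.val h)
    · exact Or.inr (congrArg Subtype.val h)

lemma isMinor_hlk {α : Type} [Fintype α] (H : SimpleGraph α)
    (h3 : treeDepth H = 3)
    (hcomp : ∀ c c' : H.ConnectedComponent,
      treeDepth (H.induce c.supp) = 3 → treeDepth (H.induce c'.supp) = 3 → c = c') :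
    IsMinor H (Hlk (Fintype.card α) (Fintype.card α)) := by
  classical
  obtain ⟨X, p, hX, hp⟩ := exists_apex_star_map H h3 hcomp
  let e := Fintype.equivFin α
  let f : α → Option (Fin (Fintype.card α) × Fin (Fintype.card α + 1)) := fun v =>
    if v ∈ X then none else if v = p v then some (e v, 0) else some (e (p v), (e v).succ)
  refine isMinor_of_hom f ?_ ?_
  · intro u v huv
    by_cases hu : u ∈ X <;> by_cases hv : v ∈ X <;> simp only [f, hu, hv, if_true, if_false] at huv
    · exact hX hu hv
    · split_ifs at huv
    · split_ifs at huv
    · split_ifs at huv with h1 h2 h2 <;> simp [Fin.ext_iff] at huv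
      · exact huv
      · exact e.injective (Fin.ext huv.2)
  · intro u v huv
    have hne := huv.ne
    by_cases hu : u ∈ X <;> by_cases hv : v ∈ X <;> simp only [f, hu, hv, if_true, if_false]
    · exact absurd (hX hu hv) hne
    · split_ifs <;> simp [Hlk]
    · split_ifs <;> simp [Hlk]
    · obtain ⟨h1, h2⟩ := hp u v huv hu hv
      by_cases hpu : u = p u
      · have hpv : v ≠ p v := fun h => hne (by rw [hpu, h1, ← h])
        rw [if_pos hpu, if_neg hpv, ← h1, ← hpu]
        simp [Hlk, (Fin.succ_ne_zero _).symm]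
      · have hpv : v = p v := by tauto
        rw [if_pos hpv, if_neg hpu, h1, ← hpv]
        simp [Hlk]

/-! ### Graphs without `Hlk` minor are sparse -/

section Sparse

open Classical in
/-- The number of neighbours of `v` in `Y`. -/
noncomputable def dg {V : Type} (G : SimpleGraph V) (Y : Finset V) (v : V) : ℕ :=
  (Y.filter (G.Adj v)).card

/-- The number of ordered pairs of adjacent vertices in `Y`, twice the number of edges in `Y`. -/
noncomputable def ePairs {V : Type} (G : SimpleGraph V) (Y : Finset V) : ℕ :=
  ∑ v ∈ Y, dg G Y v

variable {V : Type} {G : SimpleGraph V}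

open Classical in
lemma ePairs_erase {Y : Finset V} {y : V} (hy : y ∈ Y) :
    ePairs G Y = ePairs G (Y.erase y) + 2 * dg G Y y := by
  have h1 : ∀ v ∈ Y.erase y, dg G Y v = dg G (Y.erase y) v + if G.Adj y v then 1 else 0 := by
    intro v _
    unfold dg
    nth_rewrite 1 [← Finset.insert_erase hy]
    rw [Finset.filter_insert]
    by_cases h : G.Adj v y
    · rw [if_pos h, if_pos h.symm, Finset.card_insert_of_notMem (by simp)]
    · rw [if_neg h, if_neg (fun h' => h h'.symm)]
      rfl
  have h2 : ∑ v ∈ Y.erase y, (if G.Adj y v then 1 else 0) = dg G Y y := by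
    rw [← Finset.card_filter]
    unfold dg
    congr 1
    ext v
    simp only [Finset.mem_filter, Finset.mem_erase]
    constructor
    · rintro ⟨⟨-, h⟩, h'⟩; exact ⟨h, h'⟩
    · rintro ⟨h, h'⟩; exact ⟨⟨h'.ne', h⟩, h'⟩
  unfold ePairs
  rw [← Finset.add_sum_erase _ _ hy, Finset.sum_congr rfl h1, Finset.sum_add_distrib, h2]
  omega

/-- Greedy choice of `m` disjoint stars with `k` leaves in a set of large minimum degree. -/
lemma exists_stars {N : Finset V} (hN : N.Nonempty) (k m : ℕ)
    (hdeg : ∀ y ∈ N, m * (k + 1) ≤ dg G N y) :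
    ∃ S : Fin m → Fin (k + 1) → V, (∀ i a, S i a ∈ N) ∧
      (∀ i a j b, S i a = S j b → i = j ∧ a = b) ∧ ∀ i a, a ≠ 0 → G.Adj (S i 0) (S i a) := by
  classical
  induction m with
  | zero => exact ⟨fun i => i.elim0, fun i => i.elim0, fun i => i.elim0, fun i => i.elim0⟩
  | succ m ih =>
    obtain ⟨S, hSN, hSinj, hSadj⟩ := ih fun y hy => le_trans (by gcongr; omega) (hdeg y hy)
    let U : Finset V := Finset.univ.image fun p : Fin m × Fin (k + 1) => S p.1 p.2
    have hU : U.card ≤ m * (k + 1) := by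
      refine Finset.card_image_le.trans ?_
      simp
    have hUm : ∀ i a, S i a ∈ U := fun i a => Finset.mem_image.2 ⟨(i, a), Finset.mem_univ _, rfl⟩
    obtain ⟨y0, hy0⟩ := hN
    have hcard : (m + 1) * (k + 1) ≤ N.card := (hdeg y0 hy0).trans (Finset.card_filter_le _ _)
    obtain ⟨y, hyN, hyU⟩ : ∃ y ∈ N, y ∉ U := by
      by_contra hcon
      push Not at hcon
      have := Finset.card_le_card (show N ⊆ U from hcon)
      nlinarith
    have hL : k ≤ ((N.filter (G.Adj y)) \ U).card := by
      have h1 := Finset.le_card_sdiff U (N.filter (G.Adj y))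
      have h2 := hdeg y hyN
      unfold dg at h2
      have h3 : (m + 1) * (k + 1) = m * (k + 1) + (k + 1) := by ring
      omega
    obtain ⟨Lf, hLf, hLk⟩ := Finset.exists_subset_card_eq hL
    let g : Fin k → V := fun j => (Lf.equivFinOfCardEq hLk).symm j
    have hg : ∀ j, g j ∈ Lf := fun j => Subtype.prop _
    have hginj : Function.Injective g := fun a b h =>
      (Lf.equivFinOfCardEq hLk).symm.injective (Subtype.ext h)
    have hgN : ∀ j, g j ∈ N ∧ G.Adj y (g j) ∧ g j ∉ U := by
      intro j
      have := hLf (hg j)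
      simp only [Finset.mem_sdiff, Finset.mem_filter] at this
      tauto
    let s : Fin (k + 1) → V := Fin.cons y g
    have hs0 : s 0 = y := rfl
    have hss : ∀ j : Fin k, s j.succ = g j := fun j => rfl
    have hsU : ∀ a, s a ∉ U := by
      intro a
      refine Fin.cases ?_ (fun j => ?_) a
      · exact hyU
      · exact (hgN j).2.2
    have hsinj : Function.Injective s := by
      intro a b
      refine Fin.cases ?_ (fun j => ?_) a <;> refine Fin.cases ?_ (fun j' => ?_) b
      · simp
      · intro h; exact absurd h (hgN j').2.1.ne
      · intro h; exact absurd h (hgN j).2.1.ne'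
      · intro h; exact congrArg Fin.succ (hginj h)
    refine ⟨Fin.cons s S, ?_, ?_, ?_⟩
    · intro i
      refine Fin.cases ?_ (fun i => ?_) i
      · intro a
        refine Fin.cases ?_ (fun j => ?_) a
        · exact hyN
        · exact (hgN j).1
      · exact hSN i
    · intro i a i' b
      refine Fin.cases ?_ (fun i => ?_) i <;> refine Fin.cases ?_ (fun i' => ?_) i'
      · intro h; exact ⟨rfl, hsinj h⟩
      · intro h
        have h' : s a = S i' b := h
        exact absurd (h' ▸ hUm i' b) (hsU a)
      · intro h
        have h' : S i a = s b := h
        exact absurd (h' ▸ hUm i a) (hsU b)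
      · intro h
        obtain ⟨h1, h2⟩ := hSinj i a i' b h
        exact ⟨by rw [h1], h2⟩
    · intro i
      refine Fin.cases ?_ (fun i => ?_) i
      · intro a
        refine Fin.cases ?_ (fun j => ?_) a
        · intro h; exact absurd rfl h
        · intro _; exact (hgN j).2.1
      · exact hSadj i

/-- Contracting a maximal connected set along which the density does not drop yields a
neighbourhood of large minimum degree, and hence an `Hlk l k` minor. -/
lemma sparse [Finite V] {l k : ℕ} (hl : 0 < l) (hG : ¬ IsMinor (Hlk l k) G) (Y : Finset V) :
    ePairs G Y ≤ 2 * (l * (k + 1)) * Y.card := by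
  classical
  set δ := l * (k + 1) with hδ
  have hδ0 : 0 < δ := by positivity
  by_contra hcon
  push Not at hcon
  have := Fintype.ofFinite V
  obtain ⟨W, hW, hWmin⟩ := Set.exists_min_image
    {W : Finset V | W.Nonempty ∧ 2 * δ * W.card ≤ ePairs G W} Finset.card (Set.toFinite _)
    ⟨Y, by
      rw [Finset.nonempty_iff_ne_empty]
      rintro rfl
      simp [ePairs] at hcon, hcon.le⟩
  obtain ⟨⟨w0, hw0⟩, hWe⟩ := hW
  let Nb : Finset V → Finset V := fun X => (W \ X).filter fun y => ∃ x ∈ X, G.Adj x y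
  obtain ⟨X, hX, hXmax⟩ := Set.exists_max_image
    {X : Finset V | X ⊆ W ∧ Conn G (X : Set V) ∧
      2 * δ * ((W \ X).card + 1) ≤ ePairs G (W \ X) + 2 * (Nb X).card} Finset.card (Set.toFinite _)
    ⟨{w0}, by simpa using hw0, by simpa using conn_singleton w0, by
      rw [Finset.sdiff_singleton_eq_erase, Finset.card_erase_add_one hw0]
      rw [ePairs_erase hw0] at hWe
      have : Nb {w0} = W.filter (G.Adj w0) := by
        ext y
        simp only [Nb, Finset.mem_filter, Finset.mem_sdiff, Finset.mem_singleton, exists_eq_left]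
        constructor
        · rintro ⟨⟨h, -⟩, h'⟩; exact ⟨h, h'⟩
        · rintro ⟨h, h'⟩; exact ⟨⟨h, h'.ne'⟩, h'⟩
      rw [this]
      exact hWe⟩
  obtain ⟨hXW, hXc, hXe⟩ := hX
  have hNne : (Nb X).Nonempty := by
    by_contra hemp
    rw [Finset.not_nonempty_iff_eq_empty] at hemp
    rw [hemp, Finset.card_empty] at hXe
    have hle : 2 * δ * (W \ X).card ≤ ePairs G (W \ X) := by nlinarith
    have hne : (W \ X).Nonempty := by
      rw [Finset.nonempty_iff_ne_empty]
      intro h0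
      rw [h0] at hXe
      simp [ePairs] at hXe
      omega
    have h1 := hWmin (W \ X) ⟨hne, hle⟩
    obtain ⟨x, hx⟩ := hXc.nonempty
    have h2 : (W \ X).card < W.card := by
      refine Finset.card_lt_card ⟨Finset.sdiff_subset, fun h => ?_⟩
      exact (Finset.mem_sdiff.1 (h (hXW hx))).2 hx
    omega
  have hNdeg : ∀ y ∈ Nb X, δ ≤ dg G (Nb X) y := by
    intro y hy
    by_contra hlt
    have hy' := hy
    simp only [Nb, Finset.mem_filter, Finset.mem_sdiff] at hy'
    obtain ⟨⟨hyW, hyX⟩, x, hxX, hxy⟩ := hy'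
    have hZ : W \ insert y X = (W \ X).erase y := by
      ext z; simp only [Finset.mem_sdiff, Finset.mem_insert, Finset.mem_erase]; tauto
    have hyZ : y ∈ W \ X := Finset.mem_sdiff.2 ⟨hyW, hyX⟩
    have hN' : Nb (insert y X) = (Nb X).erase y ∪ (W \ X).filter (G.Adj y) := by
      ext z
      simp only [Nb, hZ, Finset.mem_filter, Finset.mem_erase, Finset.mem_union, Finset.mem_insert,
        exists_eq_or_imp]
      constructor
      · rintro ⟨⟨h1, h2⟩, h3 | h3⟩
        · exact Or.inr ⟨h2, h3⟩
        · exact Or.inl ⟨h1, h2, h3⟩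
      · rintro (⟨h1, h2, h3⟩ | ⟨h1, h2⟩)
        · exact ⟨⟨h1, h2⟩, Or.inr h3⟩
        · exact ⟨⟨h2.ne', h1⟩, Or.inl h2⟩
    have hI : (Nb X).erase y ∩ (W \ X).filter (G.Adj y) = (Nb X).filter (G.Adj y) := by
      ext z
      simp only [Nb, Finset.mem_filter, Finset.mem_erase, Finset.mem_inter]
      constructor
      · tauto
      · rintro ⟨⟨h1, h2⟩, h3⟩; exact ⟨⟨h3.ne', h1, h2⟩, h1, h3⟩
    have hcard := Finset.card_union_add_card_inter ((Nb X).erase y) ((W \ X).filter (G.Adj y))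
    rw [← hN', hI, Finset.card_erase_of_mem hy] at hcard
    have hpos : 0 < (Nb X).card := Finset.card_pos.2 ⟨y, hy⟩
    have he := ePairs_erase (G := G) hyZ
    have hZc := Finset.card_erase_add_one hyZ
    unfold dg at hlt he
    have hmem := hXmax (insert y X) ⟨Finset.insert_subset hyW hXW, by
      rw [Finset.coe_insert, Set.insert_eq, Set.union_comm]
      exact hXc.union_touch (conn_singleton y) ⟨x, hxX, y, rfl, hxy⟩, by
      rw [hZ]
      rw [← hZc] at hXe
      have h5 : 2 * δ * (((W \ X).erase y).card + 1 + 1) =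
        2 * δ * (((W \ X).erase y).card + 1) + 2 * δ := by ring
      omega⟩
    rw [Finset.card_insert_of_notMem hyX] at hmem
    omega
  obtain ⟨S, hSN, hSinj, hSadj⟩ := exists_stars hNne k l hNdeg
  refine hG (hlk_of (X := (X : Set V)) (S := fun i a => {S i a}) hXc (fun i a => conn_singleton _)
    ?_ ?_ ?_ ?_)
  · intro i a
    have := hSN i a
    simp only [Nb, Finset.mem_filter, Finset.mem_sdiff] at this
    simpa using this.1.2
  · intro i a j b h
    simp only [Set.disjoint_singleton]
    intro h'
    obtain ⟨rfl, rfl⟩ := hSinj i a j b h'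
    exact h rfl
  · intro i a
    have := hSN i a
    simp only [Nb, Finset.mem_filter, Finset.mem_sdiff] at this
    obtain ⟨x, hx, hxy⟩ := this.2
    exact ⟨x, hx, _, rfl, hxy⟩
  · intro i a ha
    exact ⟨_, rfl, _, rfl, hSadj i a ha⟩

lemma exists_small_dg [Finite V] {l k : ℕ} (hl : 0 < l) (hG : ¬ IsMinor (Hlk l k) G)
    {Y : Finset V} (hY : Y.Nonempty) : ∃ y ∈ Y, dg G Y y ≤ 2 * (l * (k + 1)) := by
  by_contra hcon
  push Not at hcon
  have h1 := sparse hl hG Y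
  have h2 : ∑ _v ∈ Y, 2 * (l * (k + 1)) < ePairs G Y := Finset.sum_lt_sum_of_nonempty hY hcon
  rw [Finset.sum_const, smul_eq_mul, mul_comm] at h2
  omega

end Sparse

/-! ### Many vertices with a common small neighbourhood -/

section Counting

/-- In a degenerate graph `J`, a large family of vertex sets that are cliques has a large subfamily
whose members share a vertex `x` and lie inside a set `insert x R` with `R` small. -/
lemma exists_common_vertex {A W : Type} (J : SimpleGraph A) (D T : ℕ)
    (hJ : ∀ Y : Finset A, Y.Nonempty → ∃ y ∈ Y, dg J Y y ≤ D) (N : W → Finset A) [DecidableEq A]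
    (n : ℕ) : ∀ (Y : Finset A) (U : Finset W), Y.card = n → T * Y.card < U.card →
    (∀ b ∈ U, (N b).Nonempty) → (∀ b ∈ U, N b ⊆ Y) →
    (∀ b ∈ U, ∀ x ∈ N b, ∀ y ∈ N b, x ≠ y → J.Adj x y) →
    ∃ (x : A) (R : Finset A) (U' : Finset W), R.card ≤ D ∧ U' ⊆ U ∧ T < U'.card ∧
      ∀ b ∈ U', x ∈ N b ∧ N b ⊆ insert x R := by
  classical
  induction n with
  | zero =>
    intro Y U hY hU hne hsub _
    rw [Finset.card_eq_zero] at hY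
    subst hY
    obtain ⟨b, hb⟩ := Finset.card_pos.1 (lt_of_le_of_lt (Nat.zero_le _) hU)
    obtain ⟨x, hx⟩ := hne b hb
    exact absurd (hsub b hb hx) (by simp)
  | succ n ih =>
    intro Y U hY hU hne hsub hcl
    obtain ⟨y, hy, hdy⟩ := hJ Y (Finset.card_pos.1 (by omega))
    by_cases hT : T < (U.filter fun b => y ∈ N b).card
    · refine ⟨y, Y.filter (J.Adj y), U.filter fun b => y ∈ N b, hdy, Finset.filter_subset _ _, hT, ?_⟩
      intro b hb
      rw [Finset.mem_filter] at hb
      refine ⟨hb.2, fun z hz => ?_⟩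
      by_cases hzy : z = y
      · simp [hzy]
      · exact Finset.mem_insert_of_mem (Finset.mem_filter.2
          ⟨hsub b hb.1 hz, hcl b hb.1 y hb.2 z hz (Ne.symm hzy)⟩)
    · have hc := Finset.card_filter_add_card_filter_not (s := U) (fun b => y ∈ N b)
      have hYc := Finset.card_erase_add_one hy
      obtain ⟨x, R, U', h1, h2, h3, h4⟩ := ih (Y.erase y) (U.filter fun b => ¬ y ∈ N b) (by omega)
        (by
          rw [← hYc] at hU
          have : T * ((Y.erase y).card + 1) = T * (Y.erase y).card + T := by ring
          omega)
        (fun b hb => hne b (Finset.mem_filter.1 hb).1)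
        (fun b hb z hz => Finset.mem_erase.2 ⟨fun h => (Finset.mem_filter.1 hb).2 (h ▸ hz),
          hsub b (Finset.mem_filter.1 hb).1 hz⟩)
        (fun b hb => hcl b (Finset.mem_filter.1 hb).1)
      exact ⟨x, R, U', h1, h2.trans (Finset.filter_subset _ _), h3, h4⟩

/-- In a sparse graph in which every vertex has a neighbour and every edge has an end of large
degree, many vertices have exactly the same small neighbourhood `S`. Low degree vertices are used
to add edges between their neighbours as long as possible; the resulting graph `J` on the high
degree vertices is a minor, hence sparse, and the neighbourhoods of all other low degree vertices
are cliques of `J`. -/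
lemma counting {W : Type} [Fintype W] [Nonempty W] (G : SimpleGraph W) {l k : ℕ} (hl : 0 < l)
    (hG : ¬ IsMinor (Hlk l k) G) (D T d : ℕ) (hD : D = 2 * (l * (k + 1)))
    (hd : D * (2 ^ D * T + D + 2) ≤ d + 1) (hiso : ∀ v, ∃ w, G.Adj v w)
    (hlight : ∀ u v, G.Adj u v → d < dg G Finset.univ u ∨ d < dg G Finset.univ v) :
    ∃ S B0 : Finset W, S.Nonempty ∧ S.card ≤ D + 1 ∧ T ≤ B0.card ∧
      ∀ b ∈ B0, ∀ w, G.Adj b w ↔ w ∈ S := by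
  classical
  have hD0 : 0 < D := by subst hD; positivity
  let A : Finset W := Finset.univ.filter fun v => d < dg G Finset.univ v
  let B : Finset W := Finset.univ.filter fun v => ¬ d < dg G Finset.univ v
  have hAB : A.card + B.card = Fintype.card W :=
    Finset.card_filter_add_card_filter_not (s := Finset.univ) (fun v => d < dg G Finset.univ v)
  have hBA : ∀ b ∈ B, ∀ w, G.Adj b w → w ∈ A := by
    intro b hb w hbw
    exact Finset.mem_filter.2 ⟨Finset.mem_univ _,
      (hlight b w hbw).resolve_left (Finset.mem_filter.1 hb).2⟩
  have hBnA : ∀ b ∈ B, b ∉ A := by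
    intro b hb hb'
    exact (Finset.mem_filter.1 hb).2 (Finset.mem_filter.1 hb').2
  have hApos : 0 < A.card := by
    obtain ⟨v⟩ := ‹Nonempty W›
    obtain ⟨w, hw⟩ := hiso v
    rw [Finset.card_pos]
    rcases hlight v w hw with h | h
    · exact ⟨v, Finset.mem_filter.2 ⟨Finset.mem_univ _, h⟩⟩
    · exact ⟨w, Finset.mem_filter.2 ⟨Finset.mem_univ _, h⟩⟩
  have hcount : (d + 1) * A.card ≤ D * (A.card + B.card) := by
    have h1 : (d + 1) * A.card ≤ ∑ v ∈ A, dg G Finset.univ v := by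
      rw [mul_comm, ← smul_eq_mul]
      exact Finset.card_nsmul_le_sum _ _ _ fun v hv => (Finset.mem_filter.1 hv).2
    have h2 : ∑ v ∈ A, dg G Finset.univ v ≤ ePairs G Finset.univ :=
      Finset.sum_le_sum_of_subset (Finset.subset_univ _)
    have h3 := sparse hl hG Finset.univ
    rw [Finset.card_univ, ← hAB, ← hD] at h3
    omega
  -- a maximal family of triples `(b, x, y)`, each using `b` to add the edge `xy`
  let good : Finset (W × A × A) → Prop := fun F =>
    (∀ p ∈ F, p.1 ∈ B ∧ p.2.1 ≠ p.2.2 ∧ G.Adj p.1 p.2.1 ∧ G.Adj p.1 p.2.2) ∧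
    (∀ p ∈ F, ∀ p' ∈ F, p.1 = p'.1 → p = p') ∧
    (∀ p ∈ F, ∀ p' ∈ F, s(p.2.1, p.2.2) = s(p'.2.1, p'.2.2) → p = p')
  obtain ⟨F, hF, hFmax⟩ := Set.exists_max_image {F | good F} Finset.card (Set.toFinite _)
    ⟨∅, by simp [good]⟩
  obtain ⟨hF1, hF2, hF3⟩ := hF
  let J : SimpleGraph A := SimpleGraph.fromRel fun x y => ∃ b, (b, x, y) ∈ F
  have hJm : IsMinor J G := by
    have hc : ∀ x : A, Conn G ({x.1} ∪ ⋃ b ∈ {b | ∃ y, (b, x, y) ∈ F}, {b}) := by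
      intro x
      refine (conn_singleton x.1).star _ _ (fun b _ => conn_singleton b) ?_
      rintro b ⟨y, hb⟩
      exact ⟨x, rfl, b, rfl, (hF1 _ hb).2.2.1.symm⟩
    refine ⟨_, fun x => (hc x).nonempty, hc, ?_, ?_⟩
    · intro x y hxy
      rw [Set.disjoint_left]
      simp only [Set.mem_union, Set.mem_singleton_iff, Set.mem_iUnion]
      rintro v (rfl | ⟨b, ⟨z, hz⟩, rfl⟩) (h | ⟨b', ⟨z', hz'⟩, h⟩)
      · exact hxy (Subtype.ext h)
      · subst h
        exact hBnA _ (hF1 _ hz').1 x.2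
      · subst h
        exact hBnA _ (hF1 _ hz).1 y.2
      · subst h
        have := hF2 _ hz _ hz' rfl
        simp only [Prod.mk.injEq] at this
        exact hxy this.2.1
    · intro x y hxy
      rw [fromRel_adj] at hxy
      obtain ⟨-, ⟨b, hb⟩ | ⟨b, hb⟩⟩ := hxy
      · refine ⟨b, Or.inr ?_, y, Or.inl rfl, (hF1 _ hb).2.2.2⟩
        simp only [Set.mem_iUnion]
        exact ⟨b, ⟨y, hb⟩, rfl⟩
      · refine ⟨x, Or.inl rfl, b, Or.inr ?_, (hF1 _ hb).2.2.2.symm⟩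
        simp only [Set.mem_iUnion]
        exact ⟨b, ⟨x, hb⟩, rfl⟩
  have hJ : ¬ IsMinor (Hlk l k) J := fun h => hG (isMinor_trans h hJm)
  have hFcard : F.card ≤ D * A.card := by
    have h1 : F.card = ∑ x : A, (F.filter fun p => p.2.1 = x).card :=
      Finset.card_eq_sum_card_fiberwise fun p _ => Finset.mem_coe.2 (Finset.mem_univ p.2.1)
    have h2 : F.card ≤ ePairs J Finset.univ := by
      rw [h1]
      refine Finset.sum_le_sum fun x _ => ?_
      refine Finset.card_le_card_of_injOn (fun p => p.2.2) ?_ ?_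
      · rintro ⟨b, x', y⟩ hp
        simp only [Finset.coe_filter, Set.mem_ofPred_eq] at hp
        obtain ⟨hp, rfl⟩ := hp
        simp only [Finset.coe_filter, Set.mem_ofPred_eq]
        exact ⟨Finset.mem_univ _, (fromRel_adj _ _ _).2 ⟨(hF1 _ hp).2.1, Or.inl ⟨b, hp⟩⟩⟩
      · rintro ⟨b, x', y⟩ hp ⟨b', x'', y'⟩ hp' h
        simp only [Finset.coe_filter, Set.mem_ofPred_eq] at hp hp' h
        obtain ⟨hp, rfl⟩ := hp
        obtain ⟨hp', rfl⟩ := hp'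
        subst h
        exact hF3 _ hp _ hp' rfl
    have h3 := sparse hl hJ Finset.univ
    rw [Finset.card_univ, ← hD, Fintype.card_coe] at h3
    omega
  let U : Finset W := B \ F.image Prod.fst
  have hUcard : 2 ^ D * T * A.card < U.card := by
    have h1 := Finset.le_card_sdiff (F.image Prod.fst) B
    have h2 : (F.image Prod.fst).card ≤ F.card := Finset.card_image_le
    have h3 : D * ((2 ^ D * T + D + 1) * A.card) ≤ D * B.card := by
      have h4 : D * (2 ^ D * T + D + 2) * A.card ≤ (d + 1) * A.card := by gcongr
      nlinarith
    have h5 := Nat.le_of_mul_le_mul_left h3 hD0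
    have h6 : (2 ^ D * T + D + 1) * A.card = 2 ^ D * T * A.card + D * A.card + A.card := by ring
    change B.card - (F.image Prod.fst).card ≤ U.card at h1
    omega
  have hUclique : ∀ b ∈ U, ∀ x y : A, G.Adj b x → G.Adj b y → x ≠ y → J.Adj x y := by
    intro b hb x y hbx hby hxy
    obtain ⟨hbB, hbF⟩ := Finset.mem_sdiff.1 hb
    have hbF' : ∀ p ∈ F, p.1 ≠ b := fun p hp h => hbF (Finset.mem_image.2 ⟨p, hp, h⟩)
    by_contra hJxy
    have hpair : ∀ p ∈ F, s(p.2.1, p.2.2) ≠ s(x, y) := by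
      rintro ⟨b', x', y'⟩ hp h
      refine hJxy ((fromRel_adj _ _ _).2 ⟨hxy, ?_⟩)
      rcases Sym2.eq_iff.1 h with ⟨rfl, rfl⟩ | ⟨rfl, rfl⟩
      · exact Or.inl ⟨b', hp⟩
      · exact Or.inr ⟨b', hp⟩
    have hlt := hFmax (insert (b, x, y) F) (by
      refine ⟨?_, ?_, ?_⟩
      · intro p hp
        rcases Finset.mem_insert.1 hp with rfl | hp
        · exact ⟨hbB, hxy, hbx, hby⟩
        · exact hF1 p hp
      · intro p hp p' hp' h
        rcases Finset.mem_insert.1 hp with rfl | hp <;>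
          rcases Finset.mem_insert.1 hp' with rfl | hp'
        · rfl
        · exact absurd h.symm (hbF' p' hp')
        · exact absurd h (hbF' p hp)
        · exact hF2 p hp p' hp' h
      · intro p hp p' hp' h
        rcases Finset.mem_insert.1 hp with rfl | hp <;>
          rcases Finset.mem_insert.1 hp' with rfl | hp'
        · rfl
        · exact absurd h.symm (hpair p' hp')
        · exact absurd h (hpair p hp)
        · exact hF3 p hp p' hp' h)
    rw [Finset.card_insert_of_notMem fun h => hbF' _ h rfl] at hlt
    omega
  let N : W → Finset A := fun b => Finset.univ.filter fun x => G.Adj b x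
  have hN : ∀ b x, x ∈ N b ↔ G.Adj b x.1 := fun b x => by simp [N]
  obtain ⟨x, R, U', hR, hU', hT', hx⟩ := exists_common_vertex J D (2 ^ D * T)
    (fun Y hY => hD ▸ exists_small_dg hl hJ hY) N _ Finset.univ U rfl
    (by rwa [Finset.card_univ, Fintype.card_coe])
    (by
      intro b hb
      obtain ⟨w, hw⟩ := hiso b
      exact ⟨⟨w, hBA b (Finset.mem_sdiff.1 hb).1 w hw⟩, (hN _ _).2 hw⟩)
    (fun b _ => Finset.subset_univ _)
    (fun b hb x hx y hy => hUclique b hb x y ((hN _ _).1 hx) ((hN _ _).1 hy))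
  obtain ⟨Q, hQ, hQc⟩ := Finset.exists_le_card_fiber_of_mul_le_card_of_maps_to
    (s := U') (t := R.powerset) (f := fun b => (N b).erase x) (n := T)
    (by
      intro b hb
      rw [Finset.mem_powerset]
      intro z hz
      obtain ⟨h1, h2⟩ := Finset.mem_erase.1 hz
      exact (Finset.mem_insert.1 ((hx b hb).2 h2)).resolve_left h1)
    ⟨∅, by simp⟩
    (by
      rw [Finset.card_powerset]
      have : 2 ^ R.card ≤ 2 ^ D := Nat.pow_le_pow_right (by omega) hR
      exact (Nat.mul_le_mul_right T this).trans hT'.le)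
  have hQR : Q.card ≤ D := (Finset.card_le_card (Finset.mem_powerset.1 hQ)).trans hR
  refine ⟨(insert x Q).map (Function.Embedding.subtype _), U'.filter fun b => (N b).erase x = Q,
    ?_, ?_, hQc, ?_⟩
  · simp
  · rw [Finset.card_map]
    exact (Finset.card_insert_le _ _).trans (by omega)
  · intro b hb w
    obtain ⟨hbU, hbQ⟩ := Finset.mem_filter.1 hb
    rw [← hbQ, Finset.insert_erase (hx b hbU).1]
    simp only [Finset.mem_map, Function.Embedding.coe_subtype]
    constructor
    · intro h
      exact ⟨⟨w, hBA b (Finset.mem_sdiff.1 (hU' hbU)).1 w h⟩, (hN _ _).2 h, rfl⟩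
    · rintro ⟨z, hz, rfl⟩
      exact (hN _ _).1 hz

end Counting

/-! ### Clumps -/

/-- A clump is a vertex set `D` obtained from single vertices by repeatedly merging two clumps that
are joined by `t` disjoint connected leaves. The set `U ⊇ D` is a connected territory which
contains the territories of the parts and the leaves of all merges. -/
inductive Clump {V : Type} (G : SimpleGraph V) (t : ℕ) : Set V → Set V → Prop
  | single (v : V) (U : Set V) (hv : v ∈ U) (hU : Conn G U) : Clump G t {v} U
  | merge (D₁ U₁ D₂ U₂ U : Set V) (L : Fin t → Set V)
      (h₁ : Clump G t D₁ U₁) (h₂ : Clump G t D₂ U₂) (hd : Disjoint U₁ U₂)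
      (hs₁ : U₁ ⊆ U) (hs₂ : U₂ ⊆ U) (hU : Conn G U)
      (hLc : ∀ j, Conn G (L j)) (hLU : ∀ j, L j ⊆ U)
      (hLd : ∀ j j', j ≠ j' → Disjoint (L j) (L j'))
      (hL₁ : ∀ j, Disjoint (L j) U₁) (hL₂ : ∀ j, Disjoint (L j) U₂)
      (hT₁ : ∀ j, Touch G (L j) D₁) (hT₂ : ∀ j, Touch G (L j) D₂) : Clump G t (D₁ ∪ D₂) U

/-- A configuration of blocks `T i` indexed by `ι` for a vertex set `N` (to be thought of as the
neighbourhood of a vertex): disjoint connected sets inside `U`, all meeting `N`, which cover `D`.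
The blocks are split into two sides, and, as soon as there are at least two blocks, every block
`T i` comes with `q` further connected sets `L i j`, each touching `T i` and a block of the other
side. -/
structure Cfg {V : Type} (G : SimpleGraph V) (N : Set V) (q : ℕ) (D U : Set V) (ι : Type) where
  T : ι → Set V
  side : ι → Bool
  L : ι → Fin q → Set V
  conn : ∀ i, Conn G (T i)
  disj : ∀ i i', i ≠ i' → Disjoint (T i) (T i')
  sub : ∀ i, T i ⊆ U
  meets : ∀ i, (T i ∩ N).Nonempty
  cover : D ⊆ ⋃ i, T i
  Lconn : Nontrivial ι → ∀ i j, Conn G (L i j)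
  Lsub : Nontrivial ι → ∀ i j, L i j ⊆ U
  Ldisj : Nontrivial ι → ∀ i j i' j', (i, j) ≠ (i', j') → Disjoint (L i j) (L i' j')
  LdisjT : Nontrivial ι → ∀ i j i', Disjoint (L i j) (T i')
  LT : Nontrivial ι → ∀ i j, Touch G (L i j) (T i)
  LT' : Nontrivial ι → ∀ i j, ∃ i', side i' ≠ side i ∧ Touch G (L i j) (T i')

section Clumps

variable {V : Type} {G : SimpleGraph V} {t : ℕ}

lemma Clump.conn {D U : Set V} (h : Clump G t D U) : Conn G U := by
  cases h <;> assumption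

lemma Clump.sub {D U : Set V} (h : Clump G t D U) : D ⊆ U := by
  induction h with
  | single v U hv hU => simpa using hv
  | merge D₁ U₁ D₂ U₂ U L h₁ h₂ hd hs₁ hs₂ hU hLc hLU hLd hL₁ hL₂ hT₁ hT₂ ih₁ ih₂ =>
    exact Set.union_subset (ih₁.trans hs₁) (ih₂.trans hs₂)

lemma Clump.mono {D U U' : Set V} (h : Clump G t D U) (hU : U ⊆ U') (hU' : Conn G U') :
    Clump G t D U' := by
  cases h with
  | single v U hv _ => exact .single v U' (hU hv) hU'
  | merge D₁ U₁ D₂ U₂ U L h₁ h₂ hd hs₁ hs₂ _ hLc hLU hLd hL₁ hL₂ hT₁ hT₂ =>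
    exact .merge D₁ U₁ D₂ U₂ U' L h₁ h₂ hd (hs₁.trans hU) (hs₂.trans hU) hU' hLc
      (fun j => (hLU j).trans hU) hLd hL₁ hL₂ hT₁ hT₂

variable {N : Set V} {q : ℕ}

/-- A configuration on a single block. -/
def Cfg.ofConn {D U : Set V} (hU : Conn G U) (hD : D ⊆ U) (hN : (U ∩ N).Nonempty) :
    Cfg G N q D U Unit where
  T := fun _ => U
  side := fun _ => true
  L := fun _ _ => ∅
  conn := fun _ => hU
  disj := fun i i' h => absurd (Subsingleton.elim i i') h
  sub := fun _ => subset_rfl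
  meets := fun _ => hN
  cover := fun _ hx => Set.mem_iUnion.2 ⟨(), hD hx⟩
  Lconn := fun h => absurd h (not_nontrivial Unit)
  Lsub := fun h => absurd h (not_nontrivial Unit)
  Ldisj := fun h => absurd h (not_nontrivial Unit)
  LdisjT := fun h => absurd h (not_nontrivial Unit)
  LT := fun h => absurd h (not_nontrivial Unit)
  LT' := fun h => absurd h (not_nontrivial Unit)

/-- A connected set `Z` outside of `U` that touches a block can be added to this block. -/
lemma Cfg.absorb {D U Z D' U' : Set V} {ι : Type} (c : Cfg G N q D U ι) (hZ : Conn G Z)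
    (hd : Disjoint U Z) (a : ι) (ha : Touch G (c.T a) Z) (hU : U ⊆ U') (hZU : Z ⊆ U')
    (hD' : D' ⊆ D ∪ Z) : Nonempty (Cfg G N q D' U' ι) := by
  classical
  let T' : ι → Set V := fun i => if i = a then c.T i ∪ Z else c.T i
  have hsub : ∀ i, c.T i ⊆ T' i := by
    intro i; simp only [T']; split_ifs
    · exact Set.subset_union_left
    · exact subset_rfl
  have hsup : ∀ i, T' i ⊆ c.T i ∪ Z := by
    intro i; simp only [T']; split_ifs
    · exact subset_rfl
    · exact Set.subset_union_left
  refine ⟨{ T := T', side := c.side, L := c.L, conn := ?_, disj := ?_, sub := ?_, meets := ?_,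
            cover := ?_, Lconn := c.Lconn, Lsub := fun h i j => (c.Lsub h i j).trans hU,
            Ldisj := c.Ldisj, LdisjT := ?_, LT := ?_, LT' := ?_ }⟩
  · intro i
    simp only [T']
    split_ifs with h
    · subst h; exact (c.conn i).union_touch hZ ha
    · exact c.conn i
  · intro i i' h
    have h1 := c.disj i i' h
    simp only [T']
    split_ifs with h2 h3 h3
    · exact absurd (h2.trans h3.symm) h
    · exact Set.disjoint_union_left.2 ⟨h1, (hd.mono_left (c.sub i')).symm⟩
    · exact Set.disjoint_union_right.2 ⟨h1, hd.mono_left (c.sub i)⟩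
    · exact h1
  · intro i
    exact (hsup i).trans (Set.union_subset ((c.sub i).trans hU) hZU)
  · intro i
    exact (c.meets i).mono (Set.inter_subset_inter_left _ (hsub i))
  · intro v hv
    rw [Set.mem_iUnion]
    rcases hD' hv with h | h
    · obtain ⟨i, hi⟩ := Set.mem_iUnion.1 (c.cover h)
      exact ⟨i, hsub i hi⟩
    · exact ⟨a, by simp only [T', if_true]; exact Or.inr h⟩
  · intro h i j i'
    exact (Set.disjoint_union_right.2 ⟨c.LdisjT h i j i', hd.mono_left (c.Lsub h i j)⟩).mono_right
      (hsup i')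
  · intro h i j
    exact (c.LT h i j).mono subset_rfl (hsub i)
  · intro h i j
    obtain ⟨i', h1, h2⟩ := c.LT' h i j
    exact ⟨i', h1, h2.mono subset_rfl (hsub _)⟩

/-- If there is only one block `a`, new sets `Lf` can serve as its leaves. -/
lemma Cfg.leaves {D U : Set V} {ι : Type} (c : Cfg G N q D U ι) (a : ι) (T' : Set V)
    (Lf : Fin q → Set V) (h1 : ∀ j, Conn G (Lf j)) (h2 : ∀ j j', j ≠ j' → Disjoint (Lf j) (Lf j'))
    (h3 : ∀ j, Disjoint (Lf j) U) (h4 : ∀ j, Touch G (Lf j) (c.T a))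
    (h5 : ∀ j, Touch G (Lf j) T') :
    ∃ L : ι → Fin q → Set V, (∀ i j, Conn G (L i j)) ∧
      (∀ i j, L i j ⊆ U ∨ ∃ e, L i j = Lf e) ∧
      (∀ i j i' j', (i, j) ≠ (i', j') → Disjoint (L i j) (L i' j')) ∧
      (∀ i j i', Disjoint (L i j) (c.T i')) ∧ (∀ i j, Touch G (L i j) (c.T i)) ∧
      ∀ i j, (∃ i', c.side i' ≠ c.side i ∧ Touch G (L i j) (c.T i')) ∨
        (i = a ∧ Touch G (L i j) T') := by
  rcases subsingleton_or_nontrivial ι with hs | hn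
  · refine ⟨fun _ => Lf, fun _ => h1, fun _ j => Or.inr ⟨j, rfl⟩, ?_, ?_, ?_, ?_⟩
    · intro i j i' j' h
      refine h2 j j' fun hj => h ?_
      rw [hj, Subsingleton.elim i i']
    · intro i j i'
      exact (h3 j).mono_right (c.sub i')
    · intro i j
      rw [Subsingleton.elim i a]
      exact h4 j
    · intro i j
      exact Or.inr ⟨Subsingleton.elim i a, h5 j⟩
  · exact ⟨c.L, c.Lconn hn, fun i j => Or.inl (c.Lsub hn i j), c.Ldisj hn, c.LdisjT hn, c.LT hn,
      fun i j => Or.inl (c.LT' hn i j)⟩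

/-- Two configurations joined by `2 * q` leaves between the blocks `a` and `b` combine. -/
lemma Cfg.combine {D₁ U₁ D₂ U₂ U : Set V} {ι₁ ι₂ : Type} (c₁ : Cfg G N q D₁ U₁ ι₁)
    (c₂ : Cfg G N q D₂ U₂ ι₂) (hd : Disjoint U₁ U₂) (hU₁ : U₁ ⊆ U) (hU₂ : U₂ ⊆ U) (a : ι₁) (b : ι₂)
    (Lf : Fin q ⊕ Fin q → Set V) (h1 : ∀ j, Conn G (Lf j))
    (h2 : ∀ j j', j ≠ j' → Disjoint (Lf j) (Lf j')) (hLU : ∀ j, Lf j ⊆ U)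
    (h3 : ∀ j, Disjoint (Lf j) U₁) (h3' : ∀ j, Disjoint (Lf j) U₂)
    (h4 : ∀ j, Touch G (Lf j) (c₁.T a)) (h5 : ∀ j, Touch G (Lf j) (c₂.T b)) :
    Nonempty (Cfg G N q (D₁ ∪ D₂) U (ι₁ ⊕ ι₂)) := by
  obtain ⟨L₁, p1, p2, p3, p4, p5, p6⟩ := c₁.leaves a (c₂.T b) (fun j => Lf (Sum.inl j))
    (fun j => h1 _) (fun j j' h => h2 _ _ fun h' => h (Sum.inl.inj h')) (fun j => h3 _)
    (fun j => h4 _) (fun j => h5 _)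
  obtain ⟨L₂, r1, r2, r3, r4, r5, r6⟩ := c₂.leaves b (c₁.T a) (fun j => Lf (Sum.inr j))
    (fun j => h1 _) (fun j j' h => h2 _ _ fun h' => h (Sum.inr.inj h')) (fun j => h3' _)
    (fun j => h5 _) (fun j => h4 _)
  -- flip the sides of the second configuration if necessary
  obtain ⟨φ, hφ, hφab⟩ : ∃ φ : Bool → Bool, Function.Injective φ ∧ φ (c₂.side b) ≠ c₁.side a := by
    by_cases h : c₂.side b = c₁.side a
    · exact ⟨not, Bool.not_injective, by rw [h]; simp⟩
    · exact ⟨id, Function.injective_id, h⟩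
  have hL₁U₂ : ∀ i j, Disjoint (L₁ i j) U₂ := by
    intro i j
    rcases p2 i j with h | ⟨e, h⟩
    · exact hd.mono_left h
    · rw [h]; exact h3' _
  have hL₂U₁ : ∀ i j, Disjoint (L₂ i j) U₁ := by
    intro i j
    rcases r2 i j with h | ⟨e, h⟩
    · exact hd.symm.mono_left h
    · rw [h]; exact h3 _
  have hL₁L₂ : ∀ i j i' j', Disjoint (L₁ i j) (L₂ i' j') := by
    intro i j i' j'
    rcases p2 i j with h | ⟨e, h⟩
    · exact ((hL₂U₁ i' j').mono_right h).symm
    · rcases r2 i' j' with h' | ⟨e', h'⟩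
      · exact (hL₁U₂ i j).mono_right h'
      · rw [h, h']; exact h2 _ _ (by simp)
  refine ⟨{ T := Sum.elim c₁.T c₂.T, side := Sum.elim c₁.side fun i => φ (c₂.side i),
            L := Sum.elim L₁ L₂, conn := ?_, disj := ?_, sub := ?_, meets := ?_, cover := ?_,
            Lconn := fun _ => ?_, Lsub := fun _ => ?_, Ldisj := fun _ => ?_,
            LdisjT := fun _ => ?_, LT := fun _ => ?_, LT' := fun _ => ?_ }⟩
  · rintro (i | i)
    · exact c₁.conn i
    · exact c₂.conn i
  · rintro (i | i) (i' | i') h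
    · exact c₁.disj i i' fun h' => h (by rw [h'])
    · exact hd.mono (c₁.sub i) (c₂.sub i')
    · exact hd.symm.mono (c₂.sub i) (c₁.sub i')
    · exact c₂.disj i i' fun h' => h (by rw [h'])
  · rintro (i | i)
    · exact (c₁.sub i).trans hU₁
    · exact (c₂.sub i).trans hU₂
  · rintro (i | i)
    · exact c₁.meets i
    · exact c₂.meets i
  · rintro v (hv | hv)
    · obtain ⟨i, hi⟩ := Set.mem_iUnion.1 (c₁.cover hv)
      exact Set.mem_iUnion.2 ⟨Sum.inl i, hi⟩
    · obtain ⟨i, hi⟩ := Set.mem_iUnion.1 (c₂.cover hv)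
      exact Set.mem_iUnion.2 ⟨Sum.inr i, hi⟩
  · rintro (i | i)
    · exact p1 i
    · exact r1 i
  · rintro (i | i) j
    · rcases p2 i j with h | ⟨e, h⟩
      · exact h.trans hU₁
      · exact h.trans_subset (hLU _)
    · rcases r2 i j with h | ⟨e, h⟩
      · exact h.trans hU₂
      · exact h.trans_subset (hLU _)
  · rintro (i | i) j (i' | i') j' h
    · exact p3 i j i' j' fun h' => h (by simpa using h')
    · exact hL₁L₂ _ _ _ _
    · exact (hL₁L₂ _ _ _ _).symm
    · exact r3 i j i' j' fun h' => h (by simpa using h')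
  · rintro (i | i) j (i' | i')
    · exact p4 i j i'
    · exact (hL₁U₂ i j).mono_right (c₂.sub i')
    · exact (hL₂U₁ i j).mono_right (c₁.sub i')
    · exact r4 i j i'
  · rintro (i | i)
    · exact p5 i
    · exact r5 i
  · rintro (i | i) j
    · rcases p6 i j with ⟨i', h, h'⟩ | ⟨rfl, h⟩
      · exact ⟨Sum.inl i', h, h'⟩
      · exact ⟨Sum.inr b, hφab, h⟩
    · rcases r6 i j with ⟨i', h, h'⟩ | ⟨rfl, h⟩
      · exact ⟨Sum.inr i', fun h'' => h (hφ h''), h'⟩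
      · exact ⟨Sum.inl a, hφab.symm, h⟩

/-- As long as configurations have at most `M` blocks, a clump `D` has a configuration with at
least as many blocks as there are elements of `N` in `D`. -/
lemma Clump.exists_cfg [Finite V] {M : ℕ} (ht : M * M * (2 * q) + 1 ≤ t)
    (hM : ∀ (D U : Set V) (ι : Type) [Fintype ι], Cfg G N q D U ι → Fintype.card ι ≤ M)
    {D U : Set V} (h : Clump G t D U) (hN : (D ∩ N).Nonempty) :
    ∃ (ι : Type) (_ : Fintype ι), Nonempty (Cfg G N q D U ι) ∧
      (D ∩ N).ncard ≤ Fintype.card ι := by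
  classical
  induction h with
  | single v U hv hU =>
    refine ⟨Unit, inferInstance, ⟨Cfg.ofConn hU (by simpa using hv) ?_⟩, ?_⟩
    · exact hN.mono (Set.inter_subset_inter_left _ (by simpa using hv))
    · refine (Set.ncard_le_ncard Set.inter_subset_left (Set.toFinite _)).trans ?_
      simp
  | merge D₁ U₁ D₂ U₂ U L h₁ h₂ hd hs₁ hs₂ hU hLc hLU hLd hL₁ hL₂ hT₁ hT₂ ih₁ ih₂ =>
    have j0 : Fin t := ⟨0, by omega⟩
    have hpick : ∀ {ι : Type} {D' U' : Set V} (c : Cfg G N q D' U' ι),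
        (∀ j, Touch G (L j) D') → ∀ j, ∃ i, Touch G (L j) (c.T i) := by
      intro ι D' U' c hT j
      obtain ⟨x, hx, y, hy, hxy⟩ := hT j
      obtain ⟨i, hi⟩ := Set.mem_iUnion.1 (c.cover hy)
      exact ⟨i, x, hx, y, hi, hxy⟩
    rw [Set.union_inter_distrib_right]
    rcases Set.eq_empty_or_nonempty (D₁ ∩ N) with hN₁ | hN₁
    · rw [Set.union_inter_distrib_right, hN₁, Set.empty_union] at hN
      rw [hN₁, Set.empty_union]
      obtain ⟨ι, hι, ⟨c⟩, hc⟩ := ih₂ hN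
      obtain ⟨a, ha⟩ := hpick c hT₂ j0
      obtain ⟨c'⟩ := c.absorb (Z := L j0 ∪ U₁) (D' := D₁ ∪ D₂) (U' := U)
        ((hLc j0).union_touch h₁.conn ((hT₁ j0).mono subset_rfl h₁.sub))
        (Set.disjoint_union_right.2 ⟨(hL₂ j0).symm, hd.symm⟩) a
        (ha.symm.mono subset_rfl Set.subset_union_left) hs₂ (Set.union_subset (hLU j0) hs₁)
        (Set.union_subset (fun v hv => Or.inr (Or.inr (h₁.sub hv))) Set.subset_union_left)
      exact ⟨ι, hι, ⟨c'⟩, hc⟩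
    rcases Set.eq_empty_or_nonempty (D₂ ∩ N) with hN₂ | hN₂
    · rw [hN₂, Set.union_empty]
      obtain ⟨ι, hι, ⟨c⟩, hc⟩ := ih₁ hN₁
      obtain ⟨a, ha⟩ := hpick c hT₁ j0
      obtain ⟨c'⟩ := c.absorb (Z := L j0 ∪ U₂) (D' := D₁ ∪ D₂) (U' := U)
        ((hLc j0).union_touch h₂.conn ((hT₂ j0).mono subset_rfl h₂.sub))
        (Set.disjoint_union_right.2 ⟨(hL₁ j0).symm, hd⟩) a
        (ha.symm.mono subset_rfl Set.subset_union_left) hs₁ (Set.union_subset (hLU j0) hs₂)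
        (Set.union_subset Set.subset_union_left (fun v hv => Or.inr (Or.inr (h₂.sub hv))))
      exact ⟨ι, hι, ⟨c'⟩, hc⟩
    obtain ⟨ι₁, hι₁, ⟨c₁⟩, hc₁⟩ := ih₁ hN₁
    obtain ⟨ι₂, hι₂, ⟨c₂⟩, hc₂⟩ := ih₂ hN₂
    choose f₁ hf₁ using hpick c₁ hT₁
    choose f₂ hf₂ using hpick c₂ hT₂
    have : Nonempty (ι₁ × ι₂) := ⟨(f₁ j0, f₂ j0)⟩
    obtain ⟨⟨a, b⟩, hab⟩ := Fintype.exists_le_card_fiber_of_mul_le_card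
      (fun j => (f₁ j, f₂ j)) (n := 2 * q) (by
        rw [Fintype.card_prod, Fintype.card_fin]
        have := Nat.mul_le_mul (hM _ _ _ c₁) (hM _ _ _ c₂)
        have := Nat.mul_le_mul_right (2 * q) this
        omega)
    obtain ⟨E, hE, hEc⟩ := Finset.exists_subset_card_eq hab
    have hcard : Fintype.card (Fin q ⊕ Fin q) = Fintype.card E := by
      simp [hEc]; omega
    let e := Fintype.equivOfCardEq hcard
    have he : ∀ j, f₁ (e j).1 = a ∧ f₂ (e j).1 = b := by
      intro j
      have := hE (e j).2
      simpa using this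
    obtain ⟨c⟩ := c₁.combine c₂ hd hs₁ hs₂ a b (fun j => L (e j).1) (fun j => hLc _)
      (fun j j' h => hLd _ _ fun h' => h (e.injective (Subtype.ext h'))) (fun j => hLU _)
      (fun j => hL₁ _) (fun j => hL₂ _)
      (fun j => by have := hf₁ (e j).1; rwa [(he j).1] at this)
      (fun j => by have := hf₂ (e j).1; rwa [(he j).2] at this)
    refine ⟨ι₁ ⊕ ι₂, inferInstance, ⟨c⟩, ?_⟩
    rw [Fintype.card_sum]
    exact (Set.ncard_union_le _ _).trans (add_le_add hc₁ hc₂)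

/-- A configuration of more than `2 * l` blocks for the neighbourhood of a vertex `x` gives an
`Hlk l k` minor: the centres are `l` blocks of the same side, and all other blocks together with
`x` form the dominant vertex. -/
lemma Cfg.hlk {l k : ℕ} (hl : 0 < l) {x : V} {D U : Set V} {ι : Type} [Fintype ι]
    (c : Cfg G (G.neighborSet x) (k + 1) D U ι) (hc : 2 * l < Fintype.card ι) :
    IsMinor (Hlk l k) G := by
  classical
  have hnt : Nontrivial ι := Fintype.one_lt_card_iff_nontrivial.1 (by omega)
  obtain ⟨s, hs⟩ : ∃ s : Bool, l ≤ (Finset.univ.filter fun i => c.side i = s ∧ x ∉ c.T i).card := by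
    by_contra hcon
    push Not at hcon
    have h1 : (Finset.univ.filter fun i => x ∈ c.T i).card ≤ 1 := by
      rw [Finset.card_le_one]
      intro i hi i' hi'
      by_contra h
      exact Set.disjoint_left.1 (c.disj i i' h) (Finset.mem_filter.1 hi).2
        (Finset.mem_filter.1 hi').2
    have h2 : (Finset.univ : Finset ι) ⊆ (Finset.univ.filter fun i => x ∈ c.T i) ∪
        ((Finset.univ.filter fun i => c.side i = true ∧ x ∉ c.T i) ∪
          (Finset.univ.filter fun i => c.side i = false ∧ x ∉ c.T i)) := by
      intro i _
      simp only [Finset.mem_union, Finset.mem_filter, Finset.mem_univ, true_and]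
      by_cases hx : x ∈ c.T i
      · exact Or.inl hx
      · cases h : c.side i <;> simp [hx]
    have h3 := (Finset.card_le_card h2).trans (Finset.card_union_le _ _)
    have h4 := Finset.card_union_le (Finset.univ.filter fun i => c.side i = true ∧ x ∉ c.T i)
      (Finset.univ.filter fun i => c.side i = false ∧ x ∉ c.T i)
    have h5 := hcon true
    have h6 := hcon false
    rw [Finset.card_univ] at h3
    omega
  obtain ⟨C, hC, hCc⟩ := Finset.exists_subset_card_eq hs
  let e : Fin l → ι := fun j => (C.equivFinOfCardEq hCc).symm j
  have heC : ∀ j, e j ∈ C := fun j => Subtype.prop _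
  have heinj : ∀ i j, e i = e j → i = j := fun a b h =>
    (C.equivFinOfCardEq hCc).symm.injective (Subtype.ext h)
  have heside : ∀ i ∈ C, c.side i = s ∧ x ∉ c.T i := fun i hi => by simpa using hC hi
  have hj0 : ∀ i, ∃ j0 : Fin (k + 1), ∀ j, j ≠ j0 → x ∉ c.L i j := by
    intro i
    by_cases h : ∃ j0, x ∈ c.L i j0
    · obtain ⟨j0, hj0⟩ := h
      refine ⟨j0, fun j hj hx => ?_⟩
      exact Set.disjoint_left.1 (c.Ldisj hnt i j i j0 fun h => hj (by simpa using h)) hx hj0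
    · push Not at h
      exact ⟨0, fun j _ => h j⟩
  choose j0 hj0 using hj0
  let lf : Fin l → Fin k → Set V := fun i j => c.L (e i) ((j0 (e i)).succAbove j)
  let S : Fin l → Fin (k + 1) → Set V := fun i => Fin.cases (c.T (e i)) (lf i)
  have hxT : ∀ i, Touch G {x} (c.T i) := by
    intro i
    obtain ⟨y, hy, hxy⟩ := c.meets i
    exact ⟨x, rfl, y, hy, hxy⟩
  refine hlk_of (X := {x} ∪ ⋃ i ∈ {i | i ∉ C}, c.T i) (S := S)
    ((conn_singleton x).star _ _ (fun i _ => c.conn i) (fun i _ => hxT i)) ?_ ?_ ?_ ?_ ?_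
  · intro i a
    refine Fin.cases ?_ (fun j => ?_) a
    · exact c.conn _
    · exact c.Lconn hnt _ _
  · intro i a
    rw [Set.disjoint_union_left, Set.disjoint_singleton_left]
    simp only [Set.disjoint_iUnion_left]
    refine Fin.cases ?_ (fun j => ?_) a
    · refine ⟨(heside _ (heC i)).2, fun i' hi' => c.disj _ _ fun h => hi' ?_⟩
      rw [h]; exact heC i
    · exact ⟨hj0 _ _ (Fin.succAbove_ne _ _), fun i' _ => (c.LdisjT hnt _ _ _).symm⟩
  · intro i a i' b
    refine Fin.cases ?_ (fun j => ?_) a <;> refine Fin.cases ?_ (fun j' => ?_) b <;> intro h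
    · exact c.disj _ _ fun h' => h (by rw [heinj _ _ h'])
    · exact (c.LdisjT hnt _ _ _).symm
    · exact c.LdisjT hnt _ _ _
    · refine c.Ldisj hnt _ _ _ _ fun h' => h ?_
      obtain ⟨h1, h2⟩ := Prod.mk.inj h'
      obtain rfl := heinj _ _ h1
      exact congrArg (fun z : Fin k => (i, z.succ)) (Fin.succAbove_right_injective h2)
  · intro i a
    refine Fin.cases ?_ (fun j => ?_) a
    · exact (hxT _).mono Set.subset_union_left subset_rfl
    · obtain ⟨i', h1, h2⟩ := c.LT' hnt (e i) ((j0 (e i)).succAbove j)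
      refine h2.symm.mono (fun v hv => Or.inr (Set.mem_biUnion ?_ hv)) subset_rfl
      intro hi'
      exact h1 ((heside _ hi').1.trans (heside _ (heC i)).1.symm)
  · intro i a
    refine Fin.cases ?_ (fun j => ?_) a
    · intro h; exact absurd rfl h
    · intro _; exact (c.LT hnt _ _).symm

/-- In a graph without `Hlk l k` minor, every vertex has few neighbours in a clump. -/
lemma Clump.ncard_neighbors_le [Finite V] {l k : ℕ} (hl : 0 < l) (hG : ¬ IsMinor (Hlk l k) G)
    (ht : 2 * l * (2 * l) * (2 * (k + 1)) + 1 ≤ t) {D U : Set V} (h : Clump G t D U) (x : V) :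
    (D ∩ G.neighborSet x).ncard ≤ 2 * l := by
  have hM : ∀ (D U : Set V) (ι : Type) [Fintype ι],
      Cfg G (G.neighborSet x) (k + 1) D U ι → Fintype.card ι ≤ 2 * l := by
    intro D U ι _ c
    by_contra hcon
    exact hG (c.hlk hl (by omega))
  rcases Set.eq_empty_or_nonempty (D ∩ G.neighborSet x) with h0 | h0
  · rw [h0]; simp
  · obtain ⟨ι, hι, ⟨c⟩, hc⟩ := h.exists_cfg ht hM h0
    exact hc.trans (hM _ _ _ c)

end Clumps

/-! ### The colouring -/

section Main

variable {V : Type} {G : SimpleGraph V} {t : ℕ}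

/-- Clumps `D s`, `s ∈ S`, can be merged if every `s` comes with `t` sets `E s j` each touching
all of the clumps. -/
lemma Clump.biUnion (ht : 0 < t) {D U : V → Set V} {E : V → Fin t → Set V} {S : Finset V}
    (hS : S.Nonempty) : (∀ s ∈ S, Clump G t (D s) (U s)) →
    (∀ s ∈ S, ∀ s' ∈ S, s ≠ s' → Disjoint (U s) (U s')) → (∀ s ∈ S, ∀ j, Conn G (E s j)) →
    (∀ s ∈ S, ∀ j, ∀ s' ∈ S, ∀ j', (s, j) ≠ (s', j') → Disjoint (E s j) (E s' j')) →
    (∀ s ∈ S, ∀ j, ∀ s' ∈ S, Disjoint (E s j) (U s')) →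
    (∀ s ∈ S, ∀ j, ∀ s' ∈ S, Touch G (E s j) (D s')) →
    Clump G t (⋃ s ∈ S, D s) (⋃ s ∈ S, (U s ∪ ⋃ j, E s j)) := by
  classical
  have hc1 : ∀ s, Clump G t (D s) (U s) → (∀ j, Conn G (E s j)) → (∀ j, Touch G (E s j) (D s)) →
      Conn G (U s ∪ ⋃ j, E s j) := by
    intro s h1 h2 h3
    have := h1.conn.star Set.univ (E s) (fun j _ => h2 j)
      (fun j _ => (h3 j).symm.mono h1.sub subset_rfl)
    simpa using this
  induction hS using Finset.Nonempty.cons_induction with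
  | singleton s =>
    intro h1 h2 h3 h4 h5 h6
    have hs := Finset.mem_singleton_self s
    simp only [Finset.mem_singleton, Set.iUnion_iUnion_eq_left]
    exact (h1 s hs).mono Set.subset_union_left
      (hc1 s (h1 s hs) (h3 s hs) fun j => h6 s hs j s hs)
  | cons s S hsS hS ih =>
    intro h1 h2 h3 h4 h5 h6
    have hs : s ∈ Finset.cons s S hsS := Finset.mem_cons_self _ _
    have hm : ∀ i ∈ S, i ∈ Finset.cons s S hsS := fun i hi => Finset.mem_cons_of_mem hi
    have hne : ∀ i ∈ S, s ≠ i := fun i hi h => hsS (h ▸ hi)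
    have ih' := ih (fun i hi => h1 i (hm i hi)) (fun i hi i' hi' => h2 i (hm i hi) i' (hm i' hi'))
      (fun i hi => h3 i (hm i hi)) (fun i hi j i' hi' => h4 i (hm i hi) j i' (hm i' hi'))
      (fun i hi j i' hi' => h5 i (hm i hi) j i' (hm i' hi'))
      (fun i hi j i' hi' => h6 i (hm i hi) j i' (hm i' hi'))
    obtain ⟨s1, hs1⟩ := hS
    have hTS : ∀ j, Touch G (E s j) (⋃ i ∈ S, D i) := fun j =>
      (h6 s hs j s1 (hm s1 hs1)).mono subset_rfl (Set.subset_biUnion_of_mem (u := D) hs1)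
    have hcs := hc1 s (h1 s hs) (h3 s hs) fun j => h6 s hs j s hs
    have e1 : (⋃ i ∈ Finset.cons s S hsS, D i) = D s ∪ ⋃ i ∈ S, D i := by
      simp [Set.iUnion_or, Set.iUnion_union_distrib]
    have e2 : (⋃ i ∈ Finset.cons s S hsS, (U i ∪ ⋃ j, E i j)) =
        (U s ∪ ⋃ j, E s j) ∪ ⋃ i ∈ S, (U i ∪ ⋃ j, E i j) := by
      simp only [Finset.mem_cons, Set.iUnion_or, Set.iUnion_union_distrib,
        Set.iUnion_iUnion_eq_left]
      rw [Set.union_union_union_comm]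
    rw [e1, e2]
    refine .merge (D s) (U s) _ _ _ (E s) (h1 s hs) ih' ?_ ?_ Set.subset_union_right ?_ (h3 s hs)
      ?_ ?_ (fun j => h5 s hs j s hs) ?_ (fun j => h6 s hs j s hs) hTS
    · simp only [Set.disjoint_iUnion_right, Set.disjoint_union_right]
      exact fun i hi => ⟨h2 s hs i (hm i hi) (hne i hi), fun j => (h5 i (hm i hi) j s hs).symm⟩
    · exact Set.subset_union_left.trans Set.subset_union_left
    · refine hcs.union_touch ih'.conn ?_
      exact (hTS ⟨0, ht⟩).mono
        (fun v hv => Or.inr (Set.mem_iUnion.2 ⟨_, hv⟩)) ih'.sub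
    · exact fun j v hv => Or.inl (Or.inr (Set.mem_iUnion.2 ⟨j, hv⟩))
    · exact fun j j' h => h4 s hs j s hs j' fun h' => h (Prod.mk.inj h').2
    · intro j
      simp only [Set.disjoint_iUnion_right, Set.disjoint_union_right]
      exact fun i hi => ⟨h5 s hs j i (hm i hi),
        fun j' => h4 s hs j i (hm i hi) j' fun h => hne i hi (Prod.mk.inj h).1⟩

/-- A stage of the reduction: clumps `D i` with disjoint territories `U i`, for `i ∈ I`, and a
graph `G'` of those adjacencies between clumps that still have to be taken care of. -/
structure Stage (G : SimpleGraph V) (t : ℕ) (I : Finset V) (G' : SimpleGraph V)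
    (D U : V → Set V) : Prop where
  clump : ∀ i ∈ I, Clump G t (D i) (U i)
  disj : ∀ i ∈ I, ∀ j ∈ I, i ≠ j → Disjoint (U i) (U j)
  adj : ∀ i j, G'.Adj i j → i ∈ I ∧ j ∈ I ∧ Touch G (D i) (D j)

/-- There is a 2-colouring, constant on the clumps, such that every vertex has at most `K`
neighbours of its own colour in its own clump and in the clumps adjacent in `G'`. -/
def Good (G : SimpleGraph V) (K : ℕ) (I : Finset V) (G' : SimpleGraph V) (D : V → Set V) : Prop :=
  ∃ c : V → Bool, (∀ i ∈ I, ∀ v ∈ D i, ∀ w ∈ D i, c v = c w) ∧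
    ∀ i ∈ I, ∀ v ∈ D i,
      {w | G.Adj v w ∧ c w = c v ∧ ∃ j ∈ I, w ∈ D j ∧ (j = i ∨ G'.Adj i j)}.ncard ≤ K

variable {I : Finset V} {G' : SimpleGraph V} {D U : V → Set V}

lemma Stage.eq_of_mem (h : Stage G t I G' D U) {i j : V} (hi : i ∈ I) (hj : j ∈ I) {v : V}
    (hvi : v ∈ D i) (hvj : v ∈ D j) : i = j := by
  by_contra hij
  exact Set.disjoint_left.1 (h.disj i hi j hj hij) ((h.clump i hi).sub hvi)
    ((h.clump j hj).sub hvj)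

lemma Stage.isMinor (h : Stage G t I G' D U) : IsMinor (G'.induce (I : Set V)) G := by
  refine ⟨fun i => U i.1, fun i => (h.clump i.1 i.2).conn.nonempty,
    fun i => (h.clump i.1 i.2).conn, ?_, ?_⟩
  · intro i j hij
    exact h.disj i.1 i.2 j.1 j.2 fun h' => hij (Subtype.ext h')
  · intro i j hij
    obtain ⟨hi, hj, hT⟩ := h.adj i.1 j.1 hij
    exact hT.mono (h.clump _ hi).sub (h.clump _ hj).sub

/-- A clump without adjacent clumps can be coloured arbitrarily. -/
lemma Stage.good_isolated [Finite V] {K m : ℕ} (h : Stage G t I G' D U)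
    (hcl : ∀ i ∈ I, ∀ v, (D i ∩ G.neighborSet v).ncard ≤ m) (hmK : m ≤ K) {i0 : V} (hi0 : i0 ∈ I)
    (hiso : ∀ j, ¬ G'.Adj i0 j) [DecidableEq V]
    (ih : Stage G t (I.erase i0) G' D U → Good G K (I.erase i0) G' D) : Good G K I G' D := by
  classical
  obtain ⟨c, hc1, hc2⟩ := ih
    { clump := fun i hi => h.clump i (Finset.mem_of_mem_erase hi)
      disj := fun i hi j hj => h.disj i (Finset.mem_of_mem_erase hi) j (Finset.mem_of_mem_erase hj)
      adj := fun i j hij => by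
        obtain ⟨h1, h2, h3⟩ := h.adj i j hij
        refine ⟨Finset.mem_erase.2 ⟨?_, h1⟩, Finset.mem_erase.2 ⟨?_, h2⟩, h3⟩
        · rintro rfl; exact hiso _ hij
        · rintro rfl; exact hiso _ hij.symm }
  have hc' : ∀ i ∈ I, i ≠ i0 → ∀ v ∈ D i, (if v ∈ D i0 then true else c v) = c v := by
    intro i hi hne v hv
    rw [if_neg]
    exact fun hv' => hne (h.eq_of_mem hi hi0 hv hv')
  refine ⟨fun v => if v ∈ D i0 then true else c v, ?_, ?_⟩
  · intro i hi v hv w hw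
    by_cases hne : i = i0
    · subst hne
      simp only [if_pos hv, if_pos hw]
    · simp only [hc' i hi hne v hv, hc' i hi hne w hw]
      exact hc1 i (Finset.mem_erase.2 ⟨hne, hi⟩) v hv w hw
  · intro i hi v hv
    by_cases hne : i = i0
    · subst hne
      refine le_trans (Set.ncard_le_ncard ?_ (Set.toFinite _)) ((hcl i hi v).trans hmK)
      rintro w ⟨hvw, -, j, hj, hwj, rfl | hij⟩
      · exact ⟨hwj, hvw⟩
      · exact absurd hij (hiso j)
    · refine le_trans (Set.ncard_le_ncard ?_ (Set.toFinite _))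
        (hc2 i (Finset.mem_erase.2 ⟨hne, hi⟩) v hv)
      rintro w ⟨hvw, hcw, j, hj, hwj, hij⟩
      have hj0 : j ≠ i0 := by
        rintro rfl
        rcases hij with rfl | hij
        · exact hne rfl
        · exact hiso _ hij.symm
      simp only [hc' i hi hne v hv, hc' j hj hj0 w hwj] at hcw
      exact ⟨hvw, hcw, j, Finset.mem_erase.2 ⟨hj0, hj⟩, hwj, hij⟩

/-- A clump with at most `d` adjacent clumps causes no problem in any colouring. -/
lemma low_degree [Finite V] {d m : ℕ}
    (hcl : ∀ i ∈ I, ∀ v, (D i ∩ G.neighborSet v).ncard ≤ m) (i : (I : Set V))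
    (hi : dg (G'.induce (I : Set V)) Finset.univ i ≤ d) (c : V → Bool) (v : V) :
    {w | G.Adj v w ∧ c w = c v ∧ ∃ j ∈ I, w ∈ D j ∧ (j = i ∨ G'.Adj i j)}.ncard
      ≤ (d + 1) * m := by
  classical
  let F : Finset (I : Set V) :=
    insert i (Finset.univ.filter ((G'.induce (I : Set V)).Adj i))
  have hF : F.card ≤ d + 1 := (Finset.card_insert_le _ _).trans (Nat.add_le_add_right hi 1)
  calc _ ≤ (⋃ j ∈ F, (D j.1 ∩ G.neighborSet v)).ncard := by
        refine Set.ncard_le_ncard ?_ (Set.toFinite _)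
        rintro w ⟨hvw, -, j, hj, hwj, hij⟩
        refine Set.mem_biUnion (x := (⟨j, hj⟩ : (I : Set V))) ?_ ⟨hwj, hvw⟩
        rcases hij with rfl | hij
        · exact Finset.mem_insert_self _ _
        · exact Finset.mem_insert_of_mem (Finset.mem_filter.2 ⟨Finset.mem_univ _, hij⟩)
    _ ≤ ∑ j ∈ F, (D j.1 ∩ G.neighborSet v).ncard := Finset.set_ncard_biUnion_le _ _
    _ ≤ ∑ _j ∈ F, m := Finset.sum_le_sum fun j _ => hcl j.1 j.2 v
    _ = F.card * m := by rw [Finset.sum_const, smul_eq_mul]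
    _ ≤ (d + 1) * m := Nat.mul_le_mul_right m hF

/-- An adjacency between two clumps of low degree can be ignored. -/
lemma Stage.good_light [Finite V] {d m : ℕ} (h : Stage G t I G' D U)
    (hcl : ∀ i ∈ I, ∀ v, (D i ∩ G.neighborSet v).ncard ≤ m) (a b : (I : Set V))
    (ha : dg (G'.induce (I : Set V)) Finset.univ a ≤ d)
    (hb : dg (G'.induce (I : Set V)) Finset.univ b ≤ d)
    (ih : Stage G t I (G'.deleteEdges {s(a.1, b.1)}) D U →
      Good G ((d + 1) * m) I (G'.deleteEdges {s(a.1, b.1)}) D) :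
    Good G ((d + 1) * m) I G' D := by
  obtain ⟨c, hc1, hc2⟩ := ih
    { clump := h.clump
      disj := h.disj
      adj := fun i j hij => h.adj i j (deleteEdges_adj.1 hij).1 }
  refine ⟨c, hc1, fun i hi v hv => ?_⟩
  by_cases hia : i = a
  · subst hia; exact low_degree hcl a ha c v
  by_cases hib : i = b
  · subst hib; exact low_degree hcl b hb c v
  refine le_trans (Set.ncard_le_ncard ?_ (Set.toFinite _)) (hc2 i hi v hv)
  rintro w ⟨hvw, hcw, j, hj, hwj, hij⟩
  refine ⟨hvw, hcw, j, hj, hwj, hij.imp_right fun hij => deleteEdges_adj.2 ⟨hij, ?_⟩⟩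
  rw [Set.mem_singleton_iff, Sym2.eq_iff]
  rintro (⟨h1, -⟩ | ⟨h1, -⟩)
  · exact hia h1
  · exact hib h1

/-- Clumps `D b`, `b ∈ B`, whose adjacent clumps are exactly the `D s`, `s ∈ S`, serve as leaves for
merging the latter into one clump; they receive the colour opposite to that of the new clump. -/
lemma Stage.good_merge [Finite V] {K m : ℕ} (ht : 0 < t) (h : Stage G t I G' D U)
    (hcl : ∀ i ∈ I, ∀ v, (D i ∩ G.neighborSet v).ncard ≤ m) (hmK : m ≤ K) {S B : Finset V}
    (hS : S.Nonempty) (hSI : S ⊆ I) (hBI : B ⊆ I) (hSB : S.card * t ≤ B.card)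
    (hadj : ∀ b ∈ B, ∀ w, G'.Adj b w ↔ w ∈ S)
    (ih : ∀ (I' : Finset V) (G'' : SimpleGraph V) (D' U' : V → Set V), Stage G t I' G'' D' U' →
      I'.card < I.card → Good G K I' G'' D') : Good G K I G' D := by
  classical
  obtain ⟨x, hx⟩ := hS
  have hBS : ∀ b ∈ B, b ∉ S := fun b hb hbS => SimpleGraph.irrefl _ ((hadj b hb b).2 hbS)
  have hTch : ∀ b ∈ B, ∀ s ∈ S, Touch G (D b) (D s) := fun b hb s hs =>
    (h.adj b s ((hadj b hb s).2 hs)).2.2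
  -- an injection assigning `t` elements of `B` to every element of `S`
  obtain ⟨f⟩ : Nonempty (S × Fin t ↪ B) := Function.Embedding.nonempty_of_card_le (by
    simpa using hSB)
  let g : V → Fin t → V := fun s j => if hs : s ∈ S then (f (⟨s, hs⟩, j)).1 else s
  have hgB : ∀ s ∈ S, ∀ j, g s j ∈ B := by
    intro s hs j
    simp only [g, dif_pos hs]
    exact Subtype.prop _
  have hginj : ∀ s ∈ S, ∀ j, ∀ s' ∈ S, ∀ j', (s, j) ≠ (s', j') → g s j ≠ g s' j' := by
    intro s hs j s' hs' j' hne heq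
    simp only [g, dif_pos hs, dif_pos hs'] at heq
    have := f.injective (Subtype.ext heq)
    simp only [Prod.mk.injEq, Subtype.mk.injEq] at this
    exact hne (Prod.ext this.1 this.2)
  let DS : Set V := ⋃ s ∈ S, D s
  let US : Set V := ⋃ s ∈ S, (U s ∪ ⋃ j, U (g s j))
  have hclump : Clump G t DS US := by
    refine Clump.biUnion (E := fun s j => U (g s j)) ht ⟨x, hx⟩ (fun s hs => h.clump s (hSI hs))
      (fun s hs s' hs' => h.disj s (hSI hs) s' (hSI hs'))
      (fun s hs j => (h.clump _ (hBI (hgB s hs j))).conn) ?_ ?_ ?_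
    · intro s hs j s' hs' j' hne
      exact h.disj _ (hBI (hgB s hs j)) _ (hBI (hgB s' hs' j')) (hginj s hs j s' hs' j' hne)
    · intro s hs j s' hs'
      refine h.disj _ (hBI (hgB s hs j)) _ (hSI hs') fun heq => ?_
      exact hBS _ (hgB s hs j) (heq ▸ hs')
    · intro s hs j s' hs'
      exact (hTch _ (hgB s hs j) s' hs').mono (h.clump _ (hBI (hgB s hs j))).sub subset_rfl
  let I' : Finset V := insert x (I \ (S ∪ B))
  let ρ : V → V := fun i => if i ∈ S then x else i
  let D' : V → Set V := fun i => if i = x then DS else D i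
  let U' : V → Set V := fun i => if i = x then US else U i
  let G'' : SimpleGraph V := SimpleGraph.fromRel fun a b =>
    a ∈ I' ∧ b ∈ I' ∧ ∃ a' b', ρ a' = a ∧ ρ b' = b ∧ G'.Adj a' b'
  have hI' : ∀ i ∈ I', i = x ∨ (i ≠ x ∧ i ∈ I ∧ i ∉ S ∧ i ∉ B) := by
    intro i hi
    simp only [I', Finset.mem_insert, Finset.mem_sdiff, Finset.mem_union] at hi
    rcases hi with hi | hi
    · exact Or.inl hi
    · refine Or.inr ⟨?_, by tauto⟩
      rintro rfl
      exact hi.2 (Or.inl hx)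
  have hD'x : D' x = DS := if_pos rfl
  have hU'x : U' x = US := if_pos rfl
  have hDsub : ∀ i, D i ⊆ D' (ρ i) := by
    intro i v hv
    by_cases hi : i ∈ S
    · simp only [ρ, if_pos hi, hD'x]
      exact Set.mem_biUnion hi hv
    · have hix : i ≠ x := fun h => hi (h ▸ hx)
      simp only [ρ, if_neg hi, D', if_neg hix]
      exact hv
  have hρI : ∀ i ∈ I, i ∉ B → ρ i ∈ I' := by
    intro i hi hiB
    by_cases hiS : i ∈ S
    · simp only [ρ, if_pos hiS]
      exact Finset.mem_insert_self _ _
    · simp only [ρ, if_neg hiS, I', Finset.mem_insert, Finset.mem_sdiff, Finset.mem_union]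
      tauto
  have hUS : ∀ i ∈ I, i ∉ S → i ∉ B → Disjoint US (U i) := by
    intro i hi hiS hiB
    simp only [US, Set.disjoint_iUnion_left, Set.disjoint_union_left]
    intro s hs
    exact ⟨h.disj s (hSI hs) i hi fun heq => hiS (heq ▸ hs),
      fun j => h.disj _ (hBI (hgB s hs j)) i hi fun heq => hiB (heq ▸ hgB s hs j)⟩
  have hcard : I'.card < I.card := by
    have hxb := hgB x hx ⟨0, ht⟩
    refine Finset.card_lt_card ⟨fun i hi => ?_, fun hsub => ?_⟩
    · rcases hI' i hi with rfl | ⟨-, hi, -⟩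
      · exact hSI hx
      · exact hi
    · rcases hI' _ (hsub (hBI hxb)) with heq | ⟨-, -, -, hnB⟩
      · have hgS : g x ⟨0, ht⟩ ∈ S := by rw [heq]; exact hx
        exact hBS _ hxb hgS
      · exact hnB hxb
  have hStage : Stage G t I' G'' D' U' := by
    refine ⟨?_, ?_, ?_⟩
    · intro i hi
      rcases hI' i hi with rfl | ⟨hix, hiI, -⟩
      · rw [hD'x, hU'x]; exact hclump
      · simp only [D', U', if_neg hix]
        exact h.clump i hiI
    · intro i hi j hj hij
      rcases hI' i hi with rfl | ⟨hix, hiI, hiS, hiB⟩ <;>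
        rcases hI' j hj with rfl | ⟨hjx, hjI, hjS, hjB⟩
      · exact absurd rfl hij
      · rw [hU'x]
        simp only [U', if_neg hjx]
        exact hUS j hjI hjS hjB
      · rw [hU'x]
        simp only [U', if_neg hix]
        exact (hUS i hiI hiS hiB).symm
      · simp only [U', if_neg hix, if_neg hjx]
        exact h.disj i hiI j hjI hij
    · intro i j hij
      rw [fromRel_adj] at hij
      obtain ⟨-, ⟨hi, hj, a, b, rfl, rfl, hab⟩ | ⟨hj, hi, b, a, rfl, rfl, hab⟩⟩ := hij
      · exact ⟨hi, hj, (h.adj a b hab).2.2.mono (hDsub a) (hDsub b)⟩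
      · exact ⟨hi, hj, (h.adj b a hab).2.2.symm.mono (hDsub a) (hDsub b)⟩
  obtain ⟨c, hc1, hc2⟩ := ih I' G'' D' U' hStage hcard
  have hxI' : x ∈ I' := Finset.mem_insert_self _ _
  obtain ⟨v0, hv0⟩ : ∃ v0, v0 ∈ DS := by
    obtain ⟨b, hb, v0, hv0, -⟩ := hTch _ (hgB x hx ⟨0, ht⟩) x hx
    exact ⟨v0, Set.mem_biUnion (t := D) hx hv0⟩
  have hcS : ∀ s ∈ S, ∀ v ∈ D s, c v = c v0 := by
    intro s hs v hv
    refine hc1 x hxI' v ?_ v0 (by rw [hD'x]; exact hv0)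
    rw [hD'x]
    exact Set.mem_biUnion hs hv
  let c' : V → Bool := fun v => if ∃ b ∈ B, v ∈ D b then !c v0 else c v
  have hc'B : ∀ b ∈ B, ∀ v ∈ D b, c' v = !c v0 := fun b hb v hv => if_pos ⟨b, hb, hv⟩
  have hc'n : ∀ i ∈ I, i ∉ B → ∀ v ∈ D i, c' v = c v := by
    intro i hi hiB v hv
    refine if_neg ?_
    rintro ⟨b, hb, hvb⟩
    exact hiB (h.eq_of_mem hi (hBI hb) hv hvb ▸ hb)
  refine ⟨c', ?_, ?_⟩
  · intro i hi v hv w hw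
    by_cases hiB : i ∈ B
    · rw [hc'B i hiB v hv, hc'B i hiB w hw]
    · rw [hc'n i hi hiB v hv, hc'n i hi hiB w hw]
      exact hc1 (ρ i) (hρI i hi hiB) v (hDsub i hv) w (hDsub i hw)
  · intro i hi v hv
    by_cases hiB : i ∈ B
    · refine le_trans (Set.ncard_le_ncard ?_ (Set.toFinite _)) ((hcl i hi v).trans hmK)
      rintro w ⟨hvw, hcw, j, hj, hwj, rfl | hij⟩
      · exact ⟨hwj, hvw⟩
      · exfalso
        have hjS := (hadj i hiB j).1 hij
        rw [hc'B i hiB v hv, hc'n j hj (fun hjB => hBS j hjB hjS) w hwj, hcS j hjS w hwj] at hcw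
        simp at hcw
    · refine le_trans (Set.ncard_le_ncard ?_ (Set.toFinite _))
        (hc2 (ρ i) (hρI i hi hiB) v (hDsub i hv))
      rintro w ⟨hvw, hcw, j, hj, hwj, hij⟩
      rw [hc'n i hi hiB v hv] at hcw
      have hjB : j ∉ B := by
        intro hjB
        rcases hij with rfl | hij
        · exact hiB hjB
        · rw [hc'B j hjB w hwj, hcS i ((hadj j hjB i).1 hij.symm) v hv] at hcw
          simp at hcw
      rw [hc'n j hj hjB w hwj] at hcw
      refine ⟨hvw, hcw, ρ j, hρI j hj hjB, hDsub j hwj, ?_⟩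
      by_cases hρ : ρ j = ρ i
      · exact Or.inl hρ
      · rcases hij with rfl | hij
        · exact absurd rfl hρ
        · exact Or.inr ((fromRel_adj _ _ _).2
            ⟨Ne.symm hρ, Or.inl ⟨hρI i hi hiB, hρI j hj hjB, i, j, rfl, rfl, hij⟩⟩)

/-- The reduction: induction on the number of clumps and, for a fixed number of clumps, on the
number of edges of `G'`. -/
lemma stage_good [Finite V] {l k d δ : ℕ} (hl : 0 < l) (hG : ¬ IsMinor (Hlk l k) G)
    (ht : 2 * l * (2 * l) * (2 * (k + 1)) + 1 ≤ t) (hδ : δ = 2 * (l * (k + 1)))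
    (hd : δ * (2 ^ δ * ((δ + 1) * t) + δ + 2) ≤ d + 1) (n : ℕ) :
    ∀ (e : ℕ) (I : Finset V) (G' : SimpleGraph V) (D U : V → Set V), Stage G t I G' D U →
      I.card = n → G'.edgeSet.ncard = e → Good G ((d + 1) * (2 * l)) I G' D := by
  classical
  induction n using Nat.strong_induction_on with
  | _ n ihn =>
  intro e
  induction e using Nat.strong_induction_on with
  | _ e ihe =>
  intro I G' D U h hI he
  have hcl : ∀ i ∈ I, ∀ v, (D i ∩ G.neighborSet v).ncard ≤ 2 * l := fun i hi v =>
    (h.clump i hi).ncard_neighbors_le hl hG ht v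
  have hmK : 2 * l ≤ (d + 1) * (2 * l) := Nat.le_mul_of_pos_left _ (Nat.succ_pos d)
  rcases Finset.eq_empty_or_nonempty I with rfl | hIne
  · exact ⟨fun _ => true, by simp, by simp⟩
  by_cases hiso : ∃ i0 ∈ I, ∀ j, ¬ G'.Adj i0 j
  · obtain ⟨i0, hi0, hiso⟩ := hiso
    refine h.good_isolated hcl hmK hi0 hiso fun h' => ?_
    exact ihn _ (by rw [← hI]; exact Finset.card_erase_lt_of_mem hi0) _ _ _ _ _ h' rfl rfl
  by_cases hlight : ∃ a b : (I : Set V), G'.Adj a.1 b.1 ∧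
      dg (G'.induce (I : Set V)) Finset.univ a ≤ d ∧ dg (G'.induce (I : Set V)) Finset.univ b ≤ d
  · obtain ⟨a, b, hab, ha, hb⟩ := hlight
    refine h.good_light hcl a b ha hb fun h' => ?_
    refine ihe _ ?_ _ _ _ _ h' hI rfl
    rw [← he, edgeSet_deleteEdges]
    refine Set.ncard_lt_ncard ⟨Set.sdiff_subset, fun hsub => ?_⟩ (Set.toFinite _)
    exact (hsub (show s(a.1, b.1) ∈ G'.edgeSet from hab)).2 rfl
  push Not at hiso hlight
  have hne : Nonempty (I : Set V) := ⟨⟨_, hIne.choose_spec⟩⟩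
  obtain ⟨S, B, hS, hSc, hB, hSB⟩ := counting (G'.induce (I : Set V)) hl
    (fun hm => hG (isMinor_trans hm h.isMinor)) δ ((δ + 1) * t) d hδ hd
    (fun v => by
      obtain ⟨w, hw⟩ := hiso v.1 v.2
      exact ⟨⟨w, (h.adj _ _ hw).2.1⟩, hw⟩)
    (fun u v huv => by
      by_contra hcon
      push Not at hcon
      exact absurd (hlight u v huv hcon.1) (not_lt.2 hcon.2))
  refine h.good_merge (S := S.map (Function.Embedding.subtype _))
    (B := B.map (Function.Embedding.subtype _)) (by omega) hcl hmK (hS.map) ?_ ?_ ?_ ?_ ?_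
  · intro i hi
    obtain ⟨j, -, rfl⟩ := Finset.mem_map.1 hi
    exact j.2
  · intro i hi
    obtain ⟨j, -, rfl⟩ := Finset.mem_map.1 hi
    exact j.2
  · rw [Finset.card_map, Finset.card_map]
    exact (Nat.mul_le_mul_right t hSc).trans hB
  · intro b hb w
    obtain ⟨b', hb', rfl⟩ := Finset.mem_map.1 hb
    constructor
    · intro hbw
      refine Finset.mem_map.2 ⟨⟨w, (h.adj _ _ hbw).2.1⟩, ?_, rfl⟩
      exact (hSB b' hb' _).1 hbw
    · intro hw
      obtain ⟨w', hw', rfl⟩ := Finset.mem_map.1 hw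
      exact (hSB b' hb' w').2 hw'
  · intro I' G'' D' U' h' hlt
    exact ihn _ (hI ▸ hlt) _ _ _ _ _ h' rfl rfl

lemma exists_defColorable {l k : ℕ} (hl : 0 < l) : ∃ K : ℕ, ∀ (V : Type) [Fintype V]
    (G : SimpleGraph V), ¬ IsMinor (Hlk l k) G → DefColorable G 2 K := by
  let t := 2 * l * (2 * l) * (2 * (k + 1)) + 1
  let δ := 2 * (l * (k + 1))
  let d := δ * (2 ^ δ * ((δ + 1) * t) + δ + 2)
  refine ⟨(d + 1) * (2 * l), fun V _ G hG => ?_⟩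
  have h : Stage G t Finset.univ G (fun v => {v}) (fun v => {v}) :=
    { clump := fun v _ => .single v {v} rfl (conn_singleton v)
      disj := fun v _ w _ hvw => by simpa using hvw
      adj := fun v w hvw => ⟨Finset.mem_univ _, Finset.mem_univ _, v, rfl, w, rfl, hvw⟩ }
  obtain ⟨c, -, hc⟩ := stage_good (d := d) hl hG le_rfl rfl (Nat.le_succ _) _ _ _ _ _ _ h rfl rfl
  refine ⟨fun v => if c v then 0 else 1, fun v => ?_⟩
  refine le_trans (Set.ncard_le_ncard ?_ (Set.toFinite _)) (hc v (Finset.mem_univ v) v rfl)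
  rintro w ⟨hvw, hcw⟩
  refine ⟨hvw, ?_, w, Finset.mem_univ _, rfl, Or.inr hvw⟩
  cases h1 : c w <;> cases h2 : c v <;> simp_all

end Main

end DefectiveTwo

/-- Let `H` be a finite simple graph with tree-depth exactly 3 such that at most one connected
component of `H` has tree-depth 3. Then the defective chromatic number of the class of
`H`-minor-free graphs equals 2: some `d` works with 2 colours, and no `d` works with 1 colour. -/
theorem stmt17 {α : Type} [Fintype α] (H : SimpleGraph α)
    (h3 : treeDepth H = 3)
    (hcomp : ∀ c c' : H.ConnectedComponent,
      treeDepth (H.induce c.supp) = 3 → treeDepth (H.induce c'.supp) = 3 → c = c') :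
    (∃ d : ℕ, ∀ (V : Type) [Fintype V] (G : SimpleGraph V),
        ¬ IsMinor H G → DefColorable G 2 d) ∧
    (∀ d : ℕ, ∃ (W : Type) (_ : Fintype W) (G : SimpleGraph W),
        ¬ IsMinor H G ∧ ¬ DefColorable G 1 d) := by
  refine ⟨?_, DefectiveTwo.lower_bound H h3⟩
  rcases isEmpty_or_nonempty α with hα | hα
  · exact ⟨0, fun V _ G hG => absurd
      ⟨isEmptyElim, isEmptyElim, isEmptyElim, fun a => isEmptyElim a, isEmptyElim⟩ hG⟩
  · obtain ⟨K, hK⟩ := DefectiveTwo.exists_defColorable (l := Fintype.card α)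
      (k := Fintype.card α) Fintype.card_pos
    exact ⟨K, fun V _ G hG => hK V G fun hm =>
      hG (DefectiveTwo.isMinor_trans (DefectiveTwo.isMinor_hlk H h3 hcomp) hm)⟩
end

section
/- There is an absolute constant c such that the following holds: for all integers ℓ ≥ 2 and k ≥ 1, let H_{ℓ,k} be the graph obtained from the disjoint union of ℓ copies of the star K_{1,k} by adding one new vertex adjacent to all other vertices; then every finite simple graph with no H_{ℓ,k} minor is (2, ⌈c·ℓ¹⁰·k³⌉)-colourable. -/
/-!
The excluded graph is a dominant vertex over `l` stars, so it appears as soon as a connected set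
`A` is contracted and `l` vertices outside `A` each have at least `T = l * (k + 2)` neighbours
which lie outside `A` and are adjacent to `A` (`card_lt_of_stars`).

It suffices to colour connected graphs. Take the distance levels from a root. Applied to several
choices of `A`, the observation above shows that on every level all but `O(l ^ 2)` vertices `v`,
the bad ones, are such that

* `v` has fewer than `T` neighbours on its own level, and fewer than `T` on the previous one;
* `v` has fewer than `T` common neighbours on the next level with any other single vertex;
* fewer than `(l + 1) * T` neighbours of `v` on the next level have a second neighbour on the
  level of `v`

(`Layering.card_badAt_le`). Colour all bad vertices `0` and all their other neighbours `1`, and,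
level by level, give any remaining vertex the colour its parent does not have.

A bad vertex has its own colour only on bad neighbours, which lie on three consecutive levels.
For a vertex `v` that is not bad, the bad neighbours and the neighbours not on the next level are
few. A neighbour `u` on the next level whose only neighbour on the level of `v` is `v` has parent
`v`, so it gets the other colour unless it is adjacent to a bad vertex `b`; then `b` lies on one
of the next two levels, which leaves `O(l ^ 2)` choices for `b`, each with fewer than `T` choices
for `u`. The defect is therefore `O(l ^ 3 * k)` (`Layering.defColorable`), which is within the
required bound.
-/

open SimpleGraph

universe u v

/-! ### Finding the excluded minor -/

section Proof

open scoped Classical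

/-- The way in which every `Hlk` minor of the proof arises: a connected set `A`, a set `Z` of
vertices outside `A` with neighbours in `A`, and `l` centres outside `A`, each with at least
`l * (k + 2)` neighbours in `Z`. The branch set of a centre also takes in one private element
of `Z`, which makes it adjacent to `A`. -/
lemma card_lt_of_stars {V : Type u} [Fintype V] {G : SimpleGraph V} {l k : ℕ}
    (hG : ¬ IsMinor (Hlk l k) G) (A : Set V) (hA : (G.induce A).Connected) (Z : Set V)
    (hZ : ∀ z ∈ Z, z ∉ A ∧ ∃ a ∈ A, G.Adj a z) (W : Finset V)
    (hW : ∀ w ∈ W, w ∉ A ∧ l * (k + 2) ≤ (Finset.univ.filter fun z => z ∈ Z ∧ G.Adj w z).card) :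
    W.card < l := by
  by_contra hcon
  push Not at hcon
  obtain ⟨W', hW'W, hW'card⟩ := Finset.exists_subset_card_eq hcon
  let e := W'.equivFinOfCardEq hW'card
  let w : Fin l → V := fun j => (e.symm j : V)
  have hwmem : ∀ j, w j ∈ W' := fun j => (e.symm j).2
  have hwinj : Function.Injective w := fun a b h => e.symm.injective (Subtype.ext h)
  -- Hall's theorem chooses disjoint sets of `k + 1` neighbours for the centres.
  let t : Fin l × Fin (k + 1) → Finset V := fun x =>
    (Finset.univ.filter fun z => z ∈ Z ∧ G.Adj (w x.1) z) \ W'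
  have htcard : ∀ x, l * (k + 1) ≤ (t x).card := by
    intro x
    have h1 := (hW _ (hW'W (hwmem x.1))).2
    have h2 := Finset.le_card_sdiff W' (Finset.univ.filter fun z => z ∈ Z ∧ G.Adj (w x.1) z)
    have h3 : l * (k + 2) = l * (k + 1) + l := by ring
    change _ ≤ ((Finset.univ.filter fun z => z ∈ Z ∧ G.Adj (w x.1) z) \ W').card
    omega
  obtain ⟨f, hfinj, hf⟩ :=
    (Finset.all_card_le_biUnion_card_iff_exists_injective t).mp (by
      intro s
      rcases s.eq_empty_or_nonempty with rfl | ⟨x, hx⟩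
      · simp
      · calc s.card ≤ Fintype.card (Fin l × Fin (k + 1)) := Finset.card_le_univ s
          _ = l * (k + 1) := by simp
          _ ≤ (t x).card := htcard x
          _ ≤ _ := Finset.card_le_card (Finset.subset_biUnion_of_mem t hx))
  have hf' : ∀ x, f x ∈ Z ∧ G.Adj (w x.1) (f x) ∧ f x ∉ W' := by
    intro x
    have := hf x
    simp only [t, Finset.mem_sdiff, Finset.mem_filter, Finset.mem_univ, true_and] at this
    exact ⟨this.1.1, this.1.2, this.2⟩
  have hwA : ∀ j, w j ∉ A := fun j => (hW _ (hW'W (hwmem j))).1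
  have hwf : ∀ j x, w j ≠ f x := fun j x h => (hf' x).2.2 (h ▸ hwmem j)
  let B : Option (Fin l × Fin (k + 1)) → Set V := fun o =>
    match o with
    | none => A
    | some x => {y | y = f x ∨ (x.2 = 0 ∧ y = w x.1)}
  have hadj : ∀ a b, (match a, b with
      | none, some _ => True
      | some (i, a), some (j, _) => i = j ∧ a = 0
      | _, _ => False : Prop) → a ≠ b → ∃ x ∈ B a, ∃ y ∈ B b, G.Adj x y := by
    rintro (_ | ⟨i, a⟩) (_ | ⟨j, b⟩) h hne
    · exact h.elim
    · obtain ⟨x, hx, hxa⟩ := (hZ _ (hf' (j, b)).1).2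
      exact ⟨x, hx, f (j, b), Or.inl rfl, hxa⟩
    · exact h.elim
    · obtain ⟨rfl, rfl⟩ := h
      exact ⟨w i, Or.inr ⟨rfl, rfl⟩, f (i, b), Or.inl rfl, (hf' (i, b)).2.1⟩
  refine hG ⟨B, ?_, ?_, ?_, ?_⟩
  · rintro (_ | x)
    · obtain ⟨a⟩ := hA.nonempty
      exact ⟨a, a.2⟩
    · exact ⟨f x, Or.inl rfl⟩
  · rintro (_ | ⟨j, a⟩)
    · exact hA
    · by_cases ha : a = 0
      · have : B (some (j, a)) = {w j, f (j, a)} := by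
          ext y; simp [B, ha, or_comm]
        rw [this]
        exact induce_pair_connected_of_adj (hf' (j, a)).2.1
      · have : B (some (j, a)) = {f (j, a)} := by
          ext y; simp [B, ha]
        rw [this]
        exact (connected_iff_exists_forall_reachable _).2
          ⟨⟨_, rfl⟩, fun ⟨y, hy⟩ => by cases hy; exact Reachable.refl _⟩
  · have hsA : ∀ x y, y ∈ B (some x) → y ∉ A := by
      rintro x y (rfl | ⟨-, rfl⟩)
      · exact (hZ _ (hf' x).1).1
      · exact hwA _
    rintro (_ | x) (_ | x') hne
    · exact (hne rfl).elim
    · exact Set.disjoint_left.2 fun y hy hy' => hsA x' y hy' hy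
    · exact Set.disjoint_left.2 fun y hy hy' => hsA x y hy hy'
    · refine Set.disjoint_left.2 fun y hy hy' => hne ?_
      rcases hy with rfl | ⟨h0, rfl⟩ <;> rcases hy' with h | ⟨h0', h⟩
      · rw [hfinj h]
      · exact (hwf _ _ h.symm).elim
      · exact (hwf _ _ h).elim
      · exact congrArg some (Prod.ext (hwinj h) (h0.trans h0'.symm))
  · intro a b hab
    simp only [Hlk, fromRel_adj] at hab
    rcases hab.2 with h | h
    · exact hadj a b h hab.1
    · obtain ⟨x, hx, y, hy, hxy⟩ := hadj b a h hab.1.symm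
      exact ⟨y, hy, x, hx, hxy.symm⟩

/-! ### Layerings -/

/-- A breadth-first layering of a connected graph: `lev` is the distance from `root`, and `par`
picks a neighbour one level lower (its value at `root` is irrelevant). -/
structure Layering {V : Type u} (G : SimpleGraph V) where
  /-- The level of a vertex. -/
  lev : V → ℕ
  /-- A neighbour on the previous level. -/
  par : V → V
  /-- The only vertex of level `0`. -/
  root : V
  lev_le : ∀ u v, G.Adj u v → lev u ≤ lev v + 1
  par_adj : ∀ v, v ≠ root → G.Adj (par v) v
  par_lev : ∀ v, v ≠ root → lev (par v) + 1 = lev v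
  lev_root : lev root = 0

lemma exists_layering {V : Type u} {G : SimpleGraph V} (hG : G.Connected) :
    Nonempty (Layering G) := by
  obtain ⟨r⟩ := hG.nonempty
  have hpar : ∀ v, ∃ p, v ≠ r → G.Adj p v ∧ G.dist r p + 1 = G.dist r v := by
    intro v
    by_cases hv : v = r
    · exact ⟨v, fun h => (h hv).elim⟩
    obtain ⟨q, hq⟩ := hG.exists_walk_length_eq_dist v r
    cases q with
    | nil => exact (hv rfl).elim
    | @cons _ p _ h q =>
      refine ⟨p, fun _ => ⟨h.symm, ?_⟩⟩
      have h1 := dist_le q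
      have h2 := hG.dist_triangle (u := r) (v := p) (w := v)
      have h3 : G.dist p v = 1 := dist_eq_one_iff_adj.2 h.symm
      rw [Walk.length_cons] at hq
      rw [dist_comm (u := p)] at h1
      rw [dist_comm (u := v)] at hq
      omega
  choose p hp using hpar
  refine ⟨⟨G.dist r, p, r, fun u v h => ?_, fun v hv => (hp v hv).1, fun v hv => (hp v hv).2,
    dist_self⟩⟩
  have h2 := hG.dist_triangle (u := r) (v := v) (w := u)
  have h3 : G.dist v u = 1 := dist_eq_one_iff_adj.2 h.symm
  omega

namespace Layering

variable {V : Type u} {G : SimpleGraph V} (L : Layering G)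

lemma eq_root {v : V} (h : L.lev v = 0) : v = L.root := by
  by_contra hv
  have := L.par_lev v hv
  omega

lemma connected_of_par (A : Set V) (hr : L.root ∈ A)
    (hA : ∀ v ∈ A, v ≠ L.root → L.par v ∈ A) : (G.induce A).Connected := by
  rw [connected_iff_exists_forall_reachable]
  refine ⟨⟨L.root, hr⟩, ?_⟩
  have key : ∀ n v (hv : v ∈ A), L.lev v = n →
      (G.induce A).Reachable ⟨L.root, hr⟩ ⟨v, hv⟩ := by
    intro n
    induction n with
    | zero =>
      intro v hv h
      obtain rfl := L.eq_root h
      exact Reachable.refl _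
    | succ n ih =>
      intro v hv h
      have hne : v ≠ L.root := by
        rintro rfl
        rw [L.lev_root] at h
        omega
      have hl := L.par_lev v hne
      refine (ih _ (hA v hv hne) (by omega)).trans (Adj.reachable ?_)
      exact L.par_adj v hne
  exact fun ⟨v, hv⟩ => key _ v hv rfl

/-- A set squeezed between all levels below `i ≥ 1` and all levels up to `i` is connected. -/
lemma connected_of_between {i : ℕ} (hi : 1 ≤ i) (A : Set V) (h1 : ∀ v, L.lev v < i → v ∈ A)
    (h2 : ∀ v ∈ A, L.lev v ≤ i) : (G.induce A).Connected := by
  refine L.connected_of_par A (h1 _ (by rw [L.lev_root]; omega)) fun v hv hne => h1 _ ?_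
  have := L.par_lev v hne
  have := h2 v hv
  omega

variable [Fintype V]

/-- The neighbours of `v` on level `i`. -/
noncomputable def nbrAt (v : V) (i : ℕ) : Finset V :=
  Finset.univ.filter fun z => L.lev z = i ∧ G.Adj v z

/-- The common neighbours of `v` and `w` on the level after that of `v`. -/
noncomputable def common (v w : V) : Finset V :=
  Finset.univ.filter fun z => L.lev z = L.lev v + 1 ∧ G.Adj v z ∧ G.Adj w z

/-- The neighbours of `v` on the next level that have a further neighbour on the level
of `v`. -/
noncomputable def shared (v : V) : Finset V :=
  Finset.univ.filter fun z => L.lev z = L.lev v + 1 ∧ G.Adj v z ∧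
    ∃ w, w ≠ v ∧ L.lev w = L.lev v ∧ G.Adj w z

/-- `v` has at least `T` common neighbours on the next level with some other vertex. -/
def Heavy (T : ℕ) (v : V) : Prop := ∃ w, w ≠ v ∧ T ≤ (L.common v w).card

/-- The vertices that the colouring treats separately: the root, vertices with many neighbours
on their own or the previous level, and vertices sharing many neighbours on the next level with
one vertex or with all the vertices of their level taken together. -/
def Bad (l T : ℕ) (v : V) : Prop :=
  v = L.root ∨ T ≤ (L.nbrAt v (L.lev v)).card ∨ T ≤ (L.nbrAt v (L.lev v - 1)).card ∨
    L.Heavy T v ∨ (l + 1) * T ≤ (L.shared v).card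

/-- The bad vertices on level `i`. -/
noncomputable def badAt (l T i : ℕ) : Finset V :=
  Finset.univ.filter fun v => L.lev v = i ∧ L.Bad l T v

lemma mem_badAt {l T i : ℕ} {v : V} : v ∈ L.badAt l T i ↔ L.lev v = i ∧ L.Bad l T v := by
  simp [badAt]

/-! ### Each level has few bad vertices -/

lemma card_many_nbrAt_lt {l k : ℕ} (hG : ¬ IsMinor (Hlk l k) G) {i : ℕ} (hi : 1 ≤ i) :
    (Finset.univ.filter fun v => i ≤ L.lev v ∧ l * (k + 2) ≤ (L.nbrAt v i).card).card < l := by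
  refine card_lt_of_stars hG {v | L.lev v < i}
    (L.connected_of_between hi _ (fun _ h => h) fun _ h => le_of_lt h) {v | L.lev v = i} ?_ _ ?_
  · intro z hz
    have hz' : L.lev z = i := hz
    have hne : z ≠ L.root := by
      rintro rfl
      rw [L.lev_root] at hz'
      omega
    have := L.par_lev z hne
    refine ⟨?_, L.par z, ?_, L.par_adj z hne⟩
    · simp [hz']
    · change L.lev (L.par z) < i
      omega
  · intro w hw
    simp only [Finset.mem_filter, Finset.mem_univ, true_and] at hw
    refine ⟨?_, ?_⟩
    · simpa using hw.1
    · simpa [nbrAt] using hw.2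

/-- Otherwise contract `A`, which consists of all levels up to `i` except for `l` of these
vertices. Not being heavy, each of the `l` vertices keeps enough neighbours adjacent to `A`. -/
lemma card_shared_lt {l k : ℕ} (hG : ¬ IsMinor (Hlk l k) G) {i : ℕ} (hi : 1 ≤ i) :
    (Finset.univ.filter fun v => L.lev v = i ∧ ¬ L.Heavy (l * (k + 2)) v ∧
      (l + 1) * (l * (k + 2)) ≤ (L.shared v).card).card < l := by
  by_contra hcon
  push Not at hcon
  obtain ⟨W, hWsub, hWcard⟩ := Finset.exists_subset_card_eq hcon
  have hW : ∀ w ∈ W, L.lev w = i ∧ ¬ L.Heavy (l * (k + 2)) w ∧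
      (l + 1) * (l * (k + 2)) ≤ (L.shared w).card := by
    intro w hw
    simpa using hWsub hw
  let A : Set V := {v | L.lev v ≤ i ∧ v ∉ W}
  have hA : (G.induce A).Connected := by
    refine L.connected_of_between hi A (fun v h => ⟨le_of_lt h, fun hv => ?_⟩) fun v h => h.1
    have := (hW v hv).1
    omega
  refine absurd hWcard (card_lt_of_stars hG A hA {z | L.lev z = i + 1 ∧ ∃ a ∈ A, G.Adj a z}
    ?_ W ?_).ne
  · rintro z ⟨hz, hz'⟩
    refine ⟨fun h => ?_, hz'⟩
    have := h.1
    omega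
  · intro w hw
    obtain ⟨hwi, hwh, hws⟩ := hW w hw
    refine ⟨fun h => h.2 hw, ?_⟩
    have hsub : L.shared w ⊆ (Finset.univ.filter fun z =>
        z ∈ {z | L.lev z = i + 1 ∧ ∃ a ∈ A, G.Adj a z} ∧ G.Adj w z) ∪
        (W.erase w).biUnion fun w' => L.common w w' := by
      intro z hz
      simp only [shared, Finset.mem_filter, Finset.mem_univ, true_and] at hz
      obtain ⟨hzl, hwz, w', hne, hw'l, hw'z⟩ := hz
      by_cases hw' : w' ∈ W
      · refine Finset.mem_union_right _ (Finset.mem_biUnion.2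
          ⟨w', Finset.mem_erase.2 ⟨hne, hw'⟩, ?_⟩)
        simp [common, hzl, hwz, hw'z]
      · refine Finset.mem_union_left _ ?_
        simp only [Finset.mem_filter, Finset.mem_univ, true_and]
        exact ⟨⟨by omega, w', ⟨by omega, hw'⟩, hw'z⟩, hwz⟩
    have hbi : ((W.erase w).biUnion fun w' => L.common w w').card ≤ l * (l * (k + 2)) := by
      refine (Finset.card_biUnion_le_card_mul _ _ (l * (k + 2)) ?_).trans ?_
      · intro w' hw'
        by_contra hlt
        exact hwh ⟨w', Finset.ne_of_mem_erase hw', by omega⟩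
      · exact Nat.mul_le_mul_right _ ((Finset.card_erase_le).trans hWcard.le)
    have h1 := (Finset.card_le_card hsub).trans (Finset.card_union_le _ _)
    have h2 : (l + 1) * (l * (k + 2)) = l * (l * (k + 2)) + l * (k + 2) := by ring
    have h3 : l * (k + 2) ≤ (Finset.univ.filter fun z =>
        z ∈ {z | L.lev z = i + 1 ∧ ∃ a ∈ A, G.Adj a z} ∧ G.Adj w z).card := by omega
    convert h3

/-- A fixed vertex `x` cannot have many common neighbours with `l` other vertices. -/
lemma card_heavy_fiber_lt {l k : ℕ} (hG : ¬ IsMinor (Hlk l k) G) (x : V) :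
    (Finset.univ.filter fun v => x ≠ v ∧ l * (k + 2) ≤ (L.common v x).card).card < l := by
  refine card_lt_of_stars hG {x} ?_ {z | G.Adj x z} ?_ _ ?_
  · exact (connected_iff_exists_forall_reachable _).2
      ⟨⟨_, rfl⟩, fun ⟨y, hy⟩ => by cases hy; exact Reachable.refl _⟩
  · intro z hz
    exact ⟨fun h => G.ne_of_adj hz h.symm, x, rfl, hz⟩
  · intro w hw
    simp only [Finset.mem_filter, Finset.mem_univ, true_and] at hw
    refine ⟨fun h => hw.1 h.symm, hw.2.trans (Finset.card_le_card ?_)⟩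
    intro z hz
    simp only [common, Finset.mem_filter, Finset.mem_univ, true_and] at hz
    simp only [Finset.mem_filter, Finset.mem_univ, true_and]
    exact ⟨hz.2.2, hz.2.1⟩

/-- Many heavy vertices yield a matching `v ↦ w v` of `l` heavy pairs; contracting the earlier
levels together with the vertices `v` makes the vertices `w v` into centres of stars. -/
lemma card_heavy_lt {l k : ℕ} (hG : ¬ IsMinor (Hlk l k) G) (hl : 1 ≤ l) {i : ℕ}
    (hi : 1 ≤ i) :
    (Finset.univ.filter fun v => L.lev v = i ∧ L.Heavy (l * (k + 2)) v).card < 2 * l * l := by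
  have hw : ∀ v, ∃ w, L.Heavy (l * (k + 2)) v →
      w ≠ v ∧ l * (k + 2) ≤ (L.common v w).card := by
    intro v
    by_cases h : L.Heavy (l * (k + 2)) v
    · obtain ⟨w, hw⟩ := h
      exact ⟨w, fun _ => hw⟩
    · exact ⟨v, fun h' => (h h').elim⟩
  choose w hw using hw
  have greedy : ∀ m (S : Finset V), (∀ v ∈ S, L.Heavy (l * (k + 2)) v) → 2 * l * m ≤ S.card →
      ∃ M ⊆ S, M.card = m ∧ Set.InjOn w M ∧ ∀ a ∈ M, ∀ b ∈ M, w a ≠ b := by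
    intro m
    induction m with
    | zero => exact fun S _ _ => ⟨∅, by simp⟩
    | succ m ih =>
      intro S hS hcard
      have hpos : 0 < S.card := by
        have : 2 * l * (m + 1) = 2 * l * m + 2 * l := by ring
        omega
      obtain ⟨v, hv⟩ := Finset.card_pos.1 hpos
      have hfib : ∀ x, (S.filter fun u => w u = x).card < l := by
        intro x
        refine lt_of_le_of_lt (Finset.card_le_card ?_) (L.card_heavy_fiber_lt hG x)
        intro u hu
        simp only [Finset.mem_filter] at hu
        obtain ⟨huS, rfl⟩ := hu
        simpa using hw u (hS u huS)
      let R : Finset V := {v, w v} ∪ ((S.filter fun u => w u = v) ∪ S.filter fun u => w u = w v)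
      have hR : R.card ≤ 2 * l := by
        have h1 := Finset.card_union_le {v, w v}
          ((S.filter fun u => w u = v) ∪ S.filter fun u => w u = w v)
        have h2 := Finset.card_union_le (S.filter fun u => w u = v) (S.filter fun u => w u = w v)
        have h3 := hfib v
        have h4 := hfib (w v)
        have h5 : ({v, w v} : Finset V).card ≤ 2 := Finset.card_le_two
        change ({v, w v} ∪ ((S.filter fun u => w u = v) ∪ S.filter fun u => w u = w v)).card ≤ _
        omega
      obtain ⟨M, hMS, hMcard, hinj, hdis⟩ := ih (S \ R)
        (fun u hu => hS u (Finset.mem_sdiff.1 hu).1) (by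
          have := Finset.le_card_sdiff R S
          have : 2 * l * (m + 1) = 2 * l * m + 2 * l := by ring
          omega)
      have hM : ∀ u ∈ M, u ≠ v ∧ u ≠ w v ∧ w u ≠ v ∧ w u ≠ w v := by
        intro u hu
        have := Finset.mem_sdiff.1 (hMS hu)
        simp only [R, Finset.mem_union, Finset.mem_insert, Finset.mem_singleton,
          Finset.mem_filter, not_or, not_and] at this
        exact ⟨this.2.1.1, this.2.1.2, this.2.2.1 this.1, this.2.2.2 this.1⟩
      have hvM : v ∉ M := fun h => (hM v h).1 rfl
      refine ⟨insert v M, ?_, ?_, ?_, ?_⟩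
      · exact Finset.insert_subset hv fun u hu => (Finset.mem_sdiff.1 (hMS hu)).1
      · rw [Finset.card_insert_of_notMem hvM, hMcard]
      · rw [Finset.coe_insert, Set.injOn_insert (by simpa using hvM)]
        refine ⟨hinj, ?_⟩
        rintro ⟨u, hu, h⟩
        exact (hM u hu).2.2.2 h
      · intro a ha b hb
        rcases Finset.mem_insert.1 ha with rfl | ha' <;>
          rcases Finset.mem_insert.1 hb with rfl | hb'
        · exact (hw _ (hS _ hv)).1
        · exact (hM b hb').2.1.symm
        · exact (hM a ha').2.2.1
        · exact hdis a ha' b hb'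
  by_contra hcon
  push Not at hcon
  obtain ⟨M, hMS, hMcard, hinj, hdis⟩ := greedy l _ (fun v hv => by
    simp only [Finset.mem_filter] at hv
    exact hv.2.2) hcon
  have hM : ∀ v ∈ M, L.lev v = i ∧ w v ≠ v ∧ l * (k + 2) ≤ (L.common v (w v)).card := by
    intro v hv
    have := hMS hv
    simp only [Finset.mem_filter, Finset.mem_univ, true_and] at this
    exact ⟨this.1, hw v this.2⟩
  let A : Set V := {v | L.lev v < i ∨ v ∈ M}
  have hA : (G.induce A).Connected := by
    refine L.connected_of_between hi A (fun v h => Or.inl h) ?_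
    rintro v (h | h)
    · exact le_of_lt h
    · exact (hM v h).1.le
  have hlt := card_lt_of_stars hG A hA {z | L.lev z = i + 1 ∧ ∃ a ∈ A, G.Adj a z} (by
    rintro z ⟨hz, hz'⟩
    refine ⟨?_, hz'⟩
    rintro (h | h)
    · omega
    · have := (hM z h).1
      omega) (M.image w) (by
    intro x hx
    obtain ⟨v, hv, rfl⟩ := Finset.mem_image.1 hx
    obtain ⟨hvi, hne, hc⟩ := hM v hv
    refine ⟨?_, hc.trans (Finset.card_le_card ?_)⟩
    · rintro (h | h)
      · have hpos : 0 < (L.common v (w v)).card := by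
          refine lt_of_lt_of_le ?_ hc
          positivity
        obtain ⟨z, hz⟩ := Finset.card_pos.1 hpos
        simp only [common, Finset.mem_filter, Finset.mem_univ, true_and] at hz
        have := L.lev_le _ _ hz.2.2.symm
        omega
      · exact hdis v hv _ h rfl
    · intro z hz
      simp only [common, Finset.mem_filter, Finset.mem_univ, true_and] at hz
      simp only [Finset.mem_filter, Finset.mem_univ, true_and]
      exact ⟨⟨by omega, v, Or.inr hv, hz.2.1⟩, hz.2.2⟩)
  rw [Finset.card_image_of_injOn hinj, hMcard] at hlt
  exact lt_irrefl _ hlt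

lemma card_badAt_le {l k : ℕ} (hG : ¬ IsMinor (Hlk l k) G) (hl : 1 ≤ l) (i : ℕ) :
    (L.badAt l (l * (k + 2)) i).card ≤ 5 * l ^ 2 := by
  have hroot : ∀ j, j = 0 → ∀ s : Finset V, (∀ v ∈ s, L.lev v = j) → s.card ≤ 1 := by
    rintro j rfl s hs
    exact Finset.card_le_one.2 fun a ha b hb =>
      (L.eq_root (hs a ha)).trans (L.eq_root (hs b hb)).symm
  rcases Nat.eq_zero_or_pos i with hi | hi
  · refine (hroot i hi _ fun v hv => ?_).trans (by nlinarith)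
    exact (L.mem_badAt.1 hv).1
  have hsub : L.badAt l (l * (k + 2)) i ⊆
      (Finset.univ.filter fun v => i ≤ L.lev v ∧ l * (k + 2) ≤ (L.nbrAt v i).card) ∪
      ((Finset.univ.filter fun v => L.lev v = i ∧ l * (k + 2) ≤ (L.nbrAt v (i - 1)).card) ∪
      ((Finset.univ.filter fun v => L.lev v = i ∧ L.Heavy (l * (k + 2)) v) ∪
      (Finset.univ.filter fun v => L.lev v = i ∧ ¬ L.Heavy (l * (k + 2)) v ∧
        (l + 1) * (l * (k + 2)) ≤ (L.shared v).card))) := by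
    intro v hv
    have hvb := (L.mem_badAt.1 hv).2
    obtain rfl := (L.mem_badAt.1 hv).1
    have hne : v ≠ L.root := by
      rintro rfl
      rw [L.lev_root] at hi
      omega
    simp only [Finset.mem_union, Finset.mem_filter, Finset.mem_univ, true_and, le_refl]
    unfold Bad at hvb
    tauto
  have hprev : (Finset.univ.filter fun v =>
      L.lev v = i ∧ l * (k + 2) ≤ (L.nbrAt v (i - 1)).card).card ≤ l := by
    rcases Nat.eq_zero_or_pos (i - 1) with h0 | h1
    · -- On level `1` there is none, as level `0` has only one vertex.
      rw [Finset.filter_eq_empty_iff.2]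
      · simp
      · rintro v - ⟨-, hv⟩
        have h1 : (L.nbrAt v (i - 1)).card ≤ 1 := hroot _ h0 _ fun z hz => by
          simp only [nbrAt, Finset.mem_filter] at hz
          exact hz.2.1
        nlinarith
    · refine (Finset.card_le_card ?_).trans (L.card_many_nbrAt_lt hG h1).le
      intro v hv
      simp only [Finset.mem_filter, Finset.mem_univ, true_and] at hv ⊢
      exact ⟨by omega, hv.2⟩
  have h1 := L.card_many_nbrAt_lt hG hi
  have h2 := L.card_heavy_lt hG hl hi
  have h3 := L.card_shared_lt hG hi
  have h4 := (Finset.card_le_card hsub).trans ((Finset.card_union_le _ _).trans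
    (Nat.add_le_add_left ((Finset.card_union_le _ _).trans
      (Nat.add_le_add_left (Finset.card_union_le _ _) _)) _))
  nlinarith

/-! ### The colouring -/

/-- Bad vertices receive colour `0`, their remaining neighbours colour `1`, and any other vertex
the colour its parent does not have. -/
lemma exists_colouring (l T : ℕ) : ∃ c : V → Fin 2,
    (∀ v, L.Bad l T v → c v = 0) ∧
    (∀ v, ¬ L.Bad l T v → (∃ b, L.Bad l T b ∧ G.Adj b v) → c v = 1) ∧
    (∀ v, ¬ L.Bad l T v → (¬ ∃ b, L.Bad l T b ∧ G.Adj b v) → c v ≠ c (L.par v)) := by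
  let col : ℕ → V → Fin 2 := fun n => Nat.rec (fun _ => 0) (fun _ f v =>
    if L.Bad l T v then 0 else if ∃ b, L.Bad l T b ∧ G.Adj b v then 1 else 1 - f (L.par v)) n
  have hcol : ∀ v, ¬ L.Bad l T v → ∃ n, L.lev v = n + 1 ∧ L.lev (L.par v) = n ∧
      col (L.lev v) v =
        if L.Bad l T v then 0 else if ∃ b, L.Bad l T b ∧ G.Adj b v then 1
          else 1 - col n (L.par v) := by
    intro v hv
    have hne : v ≠ L.root := fun h => hv (Or.inl h)
    have h := L.par_lev v hne
    exact ⟨L.lev (L.par v), h.symm, rfl, by rw [← h]⟩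
  refine ⟨fun v => col (L.lev v) v, fun v hv => ?_, fun v hv hb => ?_, fun v hv hb => ?_⟩
  · change col (L.lev v) v = 0
    cases L.lev v with
    | zero => rfl
    | succ n => exact if_pos hv
  · obtain ⟨n, -, -, h⟩ := hcol v hv
    rw [if_neg hv, if_pos hb] at h
    exact h
  · obtain ⟨n, -, hn, h⟩ := hcol v hv
    rw [if_neg hv, if_neg hb] at h
    change col (L.lev v) v ≠ col (L.lev (L.par v)) (L.par v)
    rw [h, hn]
    generalize col n (L.par v) = x
    revert x
    decide

lemma defColorable (L : Layering G) {l k : ℕ} (hG : ¬ IsMinor (Hlk l k) G) (hl : 1 ≤ l) :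
    DefColorable G 2 (15 * l ^ 2 + 2 * (l * (k + 2)) + (l + 1) * (l * (k + 2)) +
      10 * l ^ 2 * (l * (k + 2))) := by
  obtain ⟨c, hc0, hc1, hc2⟩ := L.exists_colouring l (l * (k + 2))
  set T := l * (k + 2) with hT
  refine ⟨c, fun v => ?_⟩
  have hβ : ∀ i, (L.badAt l T i).card ≤ 5 * l ^ 2 := L.card_badAt_le hG hl
  let near : Finset V :=
    L.badAt l T (L.lev v - 1) ∪ (L.badAt l T (L.lev v) ∪ L.badAt l T (L.lev v + 1))
  have hnear : near.card ≤ 15 * l ^ 2 := by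
    have h1 := Finset.card_union_le (L.badAt l T (L.lev v - 1))
      (L.badAt l T (L.lev v) ∪ L.badAt l T (L.lev v + 1))
    have h2 := Finset.card_union_le (L.badAt l T (L.lev v)) (L.badAt l T (L.lev v + 1))
    have h3 := hβ (L.lev v - 1)
    have h4 := hβ (L.lev v)
    have h5 := hβ (L.lev v + 1)
    change (L.badAt l T (L.lev v - 1) ∪ (L.badAt l T (L.lev v) ∪ L.badAt l T (L.lev v + 1))).card
      ≤ _
    omega
  have hlev : ∀ u, G.Adj v u →
      L.lev u = L.lev v - 1 ∨ L.lev u = L.lev v ∨ L.lev u = L.lev v + 1 := by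
    intro u hu
    have h1 := L.lev_le _ _ hu
    have h2 := L.lev_le _ _ hu.symm
    omega
  have hmem : ∀ u, G.Adj v u → L.Bad l T u → u ∈ near := by
    intro u hu hb
    simp only [near, Finset.mem_union, mem_badAt]
    have := hlev u hu
    tauto
  by_cases hv : L.Bad l T v
  · have hsub : {u | G.Adj v u ∧ c u = c v} ⊆ (near : Set V) := by
      rintro u ⟨hu, hcu⟩
      refine hmem u hu ?_
      by_contra hub
      rw [hc0 v hv, hc1 u hub ⟨v, hv, hu⟩] at hcu
      exact absurd hcu (by decide)
    have := Set.ncard_le_ncard hsub (Finset.finite_toSet _)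
    rw [Set.ncard_coe_finset] at this
    omega
  · let far : Finset V := (L.badAt l T (L.lev v + 1) ∪ L.badAt l T (L.lev v + 2)).biUnion
      fun b => L.common v b
    have hvb := hv
    simp only [Bad, not_or, not_le] at hvb
    obtain ⟨hvr, hv1, hv2, hv3, hv4⟩ := hvb
    have hfar : far.card ≤ 10 * l ^ 2 * T := by
      refine (Finset.card_biUnion_le_card_mul _ _ T ?_).trans (Nat.mul_le_mul_right _ ?_)
      · intro b hb
        by_contra hlt
        refine hv3 ⟨b, ?_, by omega⟩
        rintro rfl
        simp only [Finset.mem_union, mem_badAt] at hb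
        omega
      · have h1 := Finset.card_union_le (L.badAt l T (L.lev v + 1)) (L.badAt l T (L.lev v + 2))
        have h2 := hβ (L.lev v + 1)
        have h3 := hβ (L.lev v + 2)
        omega
    have hsub : {u | G.Adj v u ∧ c u = c v} ⊆ ((near ∪ (L.nbrAt v (L.lev v) ∪
        (L.nbrAt v (L.lev v - 1) ∪ (L.shared v ∪ far))) : Finset V) : Set V) := by
      rintro u ⟨hu, hcu⟩
      rw [Finset.mem_coe]
      by_contra hnot
      simp only [Finset.mem_union, not_or] at hnot
      obtain ⟨n1, n2, n3, n4, n5⟩ := hnot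
      have hub : ¬ L.Bad l T u := fun h => n1 (hmem u hu h)
      simp only [nbrAt, Finset.mem_filter, Finset.mem_univ, true_and, hu, and_true] at n2 n3
      have hul : L.lev u = L.lev v + 1 := by
        have := hlev u hu
        tauto
      -- As `u` is not shared, `v` is its only neighbour on the level of `v`.
      have honly : ∀ x, L.lev x = L.lev v → G.Adj x u → x = v := by
        intro x hx hxu
        by_contra hne
        refine n4 ?_
        simp only [shared, Finset.mem_filter, Finset.mem_univ, true_and]
        exact ⟨hul, hu, x, hne, hx, hxu⟩
      by_cases hb : ∃ b, L.Bad l T b ∧ G.Adj b u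
      · obtain ⟨b, hb, hbu⟩ := hb
        refine n5 (Finset.mem_biUnion.2 ⟨b, ?_, ?_⟩)
        · have h1 := L.lev_le _ _ hbu
          have h2 := L.lev_le _ _ hbu.symm
          have h3 : L.lev b ≠ L.lev v := fun h => hv (honly b h hbu ▸ hb)
          simp only [Finset.mem_union, mem_badAt]
          have : L.lev b = L.lev v + 1 ∨ L.lev b = L.lev v + 2 := by omega
          tauto
        · simp only [common, Finset.mem_filter, Finset.mem_univ, true_and]
          exact ⟨hul, hu, hbu⟩
      · have hur : u ≠ L.root := fun h => hub (Or.inl h)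
        have hpl := L.par_lev u hur
        have hp := honly (L.par u) (by omega) (L.par_adj u hur)
        exact hc2 u hub hb (by rw [hp, hcu])
    have h0 := Set.ncard_le_ncard hsub (Finset.finite_toSet _)
    rw [Set.ncard_coe_finset] at h0
    have h1 := h0.trans ((Finset.card_union_le _ _).trans
      (Nat.add_le_add_left ((Finset.card_union_le _ _).trans
        (Nat.add_le_add_left ((Finset.card_union_le _ _).trans
          (Nat.add_le_add_left (Finset.card_union_le _ _) _)) _)) _))
    omega

end Layering

/-! ### Reduction to connected graphs -/

lemma isMinor_of_induce {V : Type u} {α : Type v} {G : SimpleGraph V} {H : SimpleGraph α}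
    {s : Set V} (h : IsMinor H (G.induce s)) : IsMinor H G := by
  obtain ⟨B, h1, h2, h3, h4⟩ := h
  refine ⟨fun a => Subtype.val '' B a, fun a => (h1 a).image _, fun a => ?_, fun a b hab => ?_, ?_⟩
  · let φ : (G.induce s).induce (B a) →g G.induce (Subtype.val '' B a) :=
      ⟨fun x => ⟨x.1.1, x.1, x.2, rfl⟩, fun h => h⟩
    refine (h2 a).map φ ?_
    rintro ⟨-, x, hx, rfl⟩
    exact ⟨⟨x, hx⟩, rfl⟩
  · exact (Set.disjoint_image_iff Subtype.val_injective).2 (h3 hab)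
  · intro a b hab
    obtain ⟨x, hx, y, hy, hxy⟩ := h4 a b hab
    exact ⟨x, ⟨x, hx, rfl⟩, y, ⟨y, hy, rfl⟩, hxy⟩

lemma defColorable_of_components {V : Type u} [Finite V] {G : SimpleGraph V} {n d : ℕ}
    (h : ∀ C : G.ConnectedComponent, DefColorable (G.induce C.supp) n d) :
    DefColorable G n d := by
  choose c hc using h
  let c' : V → Fin n := fun v => c (G.connectedComponentMk v) ⟨v, rfl⟩
  have hc' : ∀ C (u : C.supp), c' u = c C u := by
    rintro C ⟨u, rfl⟩
    rfl
  refine ⟨c', fun v => ?_⟩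
  refine le_trans ?_ (hc (G.connectedComponentMk v) ⟨v, rfl⟩)
  rw [← Set.ncard_image_of_injective _ Subtype.val_injective]
  refine Set.ncard_le_ncard ?_ (Set.toFinite _)
  rintro u ⟨hu, hcu⟩
  have hmem : u ∈ (G.connectedComponentMk v).supp := ConnectedComponent.sound hu.symm.reachable
  refine ⟨⟨u, hmem⟩, ⟨hu, ?_⟩, rfl⟩
  rw [← hc', hcu]

end Proof

/-- There is an absolute constant `c` such that for all `ℓ ≥ 2` and `k ≥ 1`, every finite
simple graph with no `H_{ℓ,k}` minor is `(2, ⌈c ℓ¹⁰ k³⌉)`-colourable, where `H_{ℓ,k}` is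
obtained from `ℓ` disjoint copies of `K_{1,k}` by adding one dominant vertex. -/
theorem stmt18 :
    ∃ c : ℝ, ∀ (l k : ℕ), 2 ≤ l → 1 ≤ k →
      ∀ (V : Type) [Fintype V] (G : SimpleGraph V),
        ¬ IsMinor (Hlk l k) G →
        DefColorable G 2 ⌈c * (l : ℝ) ^ 10 * (k : ℝ) ^ 3⌉₊ := by
  refine ⟨100, fun l k hl hk V _ G hG => ?_⟩
  have hconn : DefColorable G 2 (15 * l ^ 2 + 2 * (l * (k + 2)) + (l + 1) * (l * (k + 2)) +
      10 * l ^ 2 * (l * (k + 2))) := by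
    classical
    refine defColorable_of_components fun C => ?_
    obtain ⟨L⟩ := exists_layering C.maximal_connected_induce_supp.prop
    exact L.defColorable (fun h => hG (isMinor_of_induce h)) (by omega)
  obtain ⟨c, hc⟩ := hconn
  refine ⟨c, fun v => (hc v).trans ?_⟩
  have hbound : 15 * l ^ 2 + 2 * (l * (k + 2)) + (l + 1) * (l * (k + 2)) +
      10 * l ^ 2 * (l * (k + 2)) ≤ 100 * (l ^ 3 * k) := by
    have h1 : l * (k + 2) ≤ l * (3 * k) := Nat.mul_le_mul_left _ (by omega)
    have h2 : l ^ 2 ≤ l ^ 3 * k := by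
      calc l ^ 2 = l ^ 2 * 1 := by ring
        _ ≤ l ^ 2 * (l * k) := Nat.mul_le_mul_left _ (Nat.mul_pos (by omega) hk)
        _ = l ^ 3 * k := by ring
    have h3 : l * (k + 2) ≤ 3 * (l ^ 3 * k) := by
      refine h1.trans ?_
      calc l * (3 * k) = 3 * (l ^ 1 * k) := by ring
        _ ≤ 3 * (l ^ 3 * k) := Nat.mul_le_mul_left _
          (Nat.mul_le_mul_right _ (Nat.pow_le_pow_right (by omega) (by omega)))
    have h4 : (l + 1) * (l * (k + 2)) ≤ 6 * (l ^ 3 * k) := by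
      calc (l + 1) * (l * (k + 2)) ≤ (2 * l) * (l * (3 * k)) := Nat.mul_le_mul (by omega) h1
        _ = 6 * (l ^ 2 * k) := by ring
        _ ≤ 6 * (l ^ 3 * k) := Nat.mul_le_mul_left _
          (Nat.mul_le_mul_right _ (Nat.pow_le_pow_right (by omega) (by omega)))
    have h5 : 10 * l ^ 2 * (l * (k + 2)) ≤ 30 * (l ^ 3 * k) := by
      calc 10 * l ^ 2 * (l * (k + 2)) ≤ 10 * l ^ 2 * (l * (3 * k)) := Nat.mul_le_mul_left _ h1
        _ = 30 * (l ^ 3 * k) := by ring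
    omega
  have hpow : 100 * (l ^ 3 * k) ≤ 100 * (l ^ 10 * k ^ 3) :=
    Nat.mul_le_mul_left _ (Nat.mul_le_mul (Nat.pow_le_pow_right (by omega) (by omega))
      (Nat.le_self_pow (by omega) k))
  refine hbound.trans (hpow.trans ?_)
  refine Nat.cast_le (α := ℝ) |>.1 (le_trans (le_of_eq ?_) (Nat.le_ceil _))
  push_cast
  ring
end

section
/- Let T be a tree with n ≥ 2 vertices and radius r ≥ 1. Then every finite simple graph containing no subgraph isomorphic to T is (r, n−2)-colourable. -/
/-!
Put `H₀ = V(G)` and let `Hᵢ₊₁` be the set of vertices with at least `n - 1` neighbours in `Hᵢ`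
(`richSet`).

If `Hᵣ` is empty, then every vertex `v` has an index `i < r` with `v ∈ Hᵢ` and `v ∉ Hᵢ₊₁`; colour
`v` by such an `i`. All neighbours of `v` with colour `i` lie in `Hᵢ`, so there are at most `n - 2`
of them.

If `Hᵣ` is nonempty, then `T`, rooted at a vertex of eccentricity at most `r`, embeds greedily in
`G` with vertices at depth `d` placed in `H_{r-d}` (`exists_partial_embedding`): the vertices are
added by increasing depth, and when a child of `p` is to be added, at most `n - 2` vertices other
than the image of `p` are occupied, whereas that image has `n - 1` neighbours in the required set.
Adding a child cannot violate any other adjacency, since in a tree the neighbour closer to the root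
is unique (`parent_unique`).
-/

open SimpleGraph

universe u v

/-- The iterated sets of vertices of large degree: `richSet G m 0` is the whole vertex set, and
`richSet G m (i + 1)` consists of the vertices with at least `m` neighbours in `richSet G m i`. -/
def richSet {V : Type*} (G : SimpleGraph V) (m : ℕ) : ℕ → Set V
  | 0 => Set.univ
  | i + 1 => {v | m ≤ {w | G.Adj v w ∧ w ∈ richSet G m i}.ncard}

lemma parent_exists {β : Type*} {T : SimpleGraph β} (hT : T.IsTree) {root x : β} (hx : x ≠ root) :
    ∃ p, T.Adj p x ∧ T.dist root x = T.dist root p + 1 := by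
  obtain ⟨w, hw⟩ := hT.connected.exists_walk_length_eq_dist x root
  cases w with
  | nil => exact absurd rfl hx
  | @cons _ p _ hadj q =>
    refine ⟨p, hadj.symm, ?_⟩
    have h1 := SimpleGraph.dist_le q
    rw [SimpleGraph.Walk.length_cons] at hw
    rw [T.dist_comm (u := p)] at h1
    rw [T.dist_comm (u := x)] at hw
    rcases hT.dist_eq_dist_add_one_of_adj root hadj with h | h <;> omega

/-- Extending shortest walks from the root to `p` and to `q` by `x` gives two paths with the same
ends, which coincide in a tree; compare their penultimate vertices. -/
lemma parent_unique {β : Type*} {T : SimpleGraph β} (hT : T.IsTree) {root x p q : β}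
    (hp : T.Adj p x) (hq : T.Adj q x) (hdp : T.dist root x = T.dist root p + 1)
    (hdq : T.dist root x = T.dist root q + 1) : p = q := by
  obtain ⟨w, hw⟩ := hT.connected.exists_walk_length_eq_dist root p
  obtain ⟨w', hw'⟩ := hT.connected.exists_walk_length_eq_dist root q
  have h1 : (w.concat hp).IsPath :=
    SimpleGraph.Walk.isPath_of_length_eq_dist _ (by rw [SimpleGraph.Walk.length_concat]; omega)
  have h2 : (w'.concat hq).IsPath :=
    SimpleGraph.Walk.isPath_of_length_eq_dist _ (by rw [SimpleGraph.Walk.length_concat]; omega)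
  have h3 : w.concat hp = w'.concat hq :=
    congrArg Subtype.val
      ((hT.isAcyclic.subsingleton_path root x).elim ⟨_, h1⟩ ⟨_, h2⟩)
  have h4 := congrArg SimpleGraph.Walk.penultimate h3
  simpa only [SimpleGraph.Walk.penultimate_concat] using h4

/-- Greedy embedding of `k + 1` vertices of a rooted tree of depth at most `r`, given a vertex of
`richSet G (card β - 1) r`. The set `S` of embedded vertices is closed under passing to a
neighbour that is closer to the root. -/
lemma exists_partial_embedding {β V : Type*} [Fintype β] [Finite V] {T : SimpleGraph β}
    (hT : T.IsTree) {G : SimpleGraph V} {r : ℕ} {root : β} (hroot : ∀ u, T.dist root u ≤ r)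
    {v₀ : V} (hv₀ : v₀ ∈ richSet G (Fintype.card β - 1) r) (k : ℕ) (hk : k + 1 ≤ Fintype.card β) :
    ∃ (S : Finset β) (f : β → V), S.card = k + 1 ∧ root ∈ S ∧ Set.InjOn f S ∧
      (∀ u ∈ S, ∀ w ∈ S, T.Adj u w → G.Adj (f u) (f w)) ∧
      (∀ u ∈ S, f u ∈ richSet G (Fintype.card β - 1) (r - T.dist root u)) ∧
      (∀ u ∈ S, ∀ w, T.Adj u w → T.dist root w < T.dist root u → w ∈ S) := by
  classical
  induction k with
  | zero =>
    refine ⟨{root}, fun _ => v₀, by simp, by simp, by simp, ?_, ?_, ?_⟩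
    · intro u hu w hw h
      rw [Finset.mem_singleton] at hu hw
      subst hu hw
      exact absurd h T.irrefl
    · intro u hu
      rw [Finset.mem_singleton] at hu
      subst hu
      simpa using hv₀
    · intro u hu w _ h
      rw [Finset.mem_singleton] at hu
      subst hu
      simp at h
  | succ k ih =>
    obtain ⟨S, f, hcard, hrS, hinj, hadj, hrich, hclosed⟩ := ih (by omega)
    have hne : (Finset.univ \ S).Nonempty := by
      rw [← Finset.card_pos, Finset.card_sdiff_of_subset (Finset.subset_univ S), Finset.card_univ]
      omega
    obtain ⟨x, hxS, hxmin⟩ := Finset.exists_min_image _ (fun u => T.dist root u) hne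
    simp only [Finset.mem_sdiff, Finset.mem_univ, true_and] at hxS hxmin
    have hx : x ≠ root := fun h => hxS (h ▸ hrS)
    obtain ⟨p, hpx, hdp⟩ := parent_exists hT hx
    have hpS : p ∈ S := by
      by_contra hp
      have := hxmin p hp
      omega
    have hdx := hroot x
    have hfp := hrich p hpS
    rw [show r - T.dist root p = (r - T.dist root x) + 1 by omega] at hfp
    change _ ≤ Set.ncard _ at hfp
    -- The image of `p` is not its own neighbour, so only the rest of `S` can block a choice.
    obtain ⟨y, ⟨hpy, hy⟩, hyS⟩ : ∃ y, (G.Adj (f p) y ∧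
        y ∈ richSet G (Fintype.card β - 1) (r - T.dist root x)) ∧
        y ∉ (((S.erase p).image f : Finset V) : Set V) := by
      refine Set.exists_mem_notMem_of_ncard_lt_ncard ?_ (Finset.finite_toSet _)
      rw [Set.ncard_coe_finset]
      have h1 := Finset.card_image_le (s := S.erase p) (f := f)
      rw [Finset.card_erase_of_mem hpS] at h1
      refine lt_of_lt_of_le ?_ hfp
      omega
    have hyne : ∀ u ∈ S, f u ≠ y := by
      intro u hu huy
      by_cases hup : u = p
      · subst hup
        rw [huy] at hpy
        exact G.irrefl hpy
      · exact hyS (by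
          simp only [Finset.coe_image, Set.mem_image, Finset.mem_coe, Finset.mem_erase]
          exact ⟨u, ⟨hup, hu⟩, huy⟩)
    have hnex : ∀ u ∈ S, u ≠ x := fun u hu h => hxS (h ▸ hu)
    have honly : ∀ u ∈ S, T.Adj u x → u = p := by
      intro u hu hux
      rcases hT.dist_eq_dist_add_one_of_adj root hux with h | h
      · exact absurd (hclosed u hu x hux (by omega)) hxS
      · exact parent_unique hT hux hpx h hdp
    refine ⟨insert x S, Function.update f x y, ?_, Finset.mem_insert_of_mem hrS, ?_, ?_, ?_, ?_⟩
    · rw [Finset.card_insert_of_notMem hxS, hcard]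
    · intro u hu w hw huw
      rw [Finset.mem_coe, Finset.mem_insert] at hu hw
      rcases hu with rfl | hu <;> rcases hw with rfl | hw
      · rfl
      · rw [Function.update_self, Function.update_of_ne (hnex w hw)] at huw
        exact absurd huw.symm (hyne w hw)
      · rw [Function.update_self, Function.update_of_ne (hnex u hu)] at huw
        exact absurd huw (hyne u hu)
      · rw [Function.update_of_ne (hnex u hu), Function.update_of_ne (hnex w hw)] at huw
        exact hinj hu hw huw
    · intro u hu w hw huw
      rw [Finset.mem_insert] at hu hw
      rcases hu with rfl | hu <;> rcases hw with rfl | hw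
      · exact absurd huw T.irrefl
      · rw [Function.update_self, Function.update_of_ne (hnex w hw), honly w hw huw.symm]
        exact hpy.symm
      · rw [Function.update_self, Function.update_of_ne (hnex u hu), honly u hu huw]
        exact hpy
      · rw [Function.update_of_ne (hnex u hu), Function.update_of_ne (hnex w hw)]
        exact hadj u hu w hw huw
    · intro u hu
      rw [Finset.mem_insert] at hu
      rcases hu with rfl | hu
      · rw [Function.update_self]
        exact hy
      · rw [Function.update_of_ne (hnex u hu)]
        exact hrich u hu
    · intro u hu w huw hlt
      rw [Finset.mem_insert] at hu ⊢
      rcases hu with rfl | hu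
      · right
        by_contra hw
        have := hxmin w hw
        omega
      · exact Or.inr (hclosed u hu w huw hlt)

/-- Let `T` be a tree with `n ≥ 2` vertices and radius `r ≥ 1`. Then every finite simple graph
containing no subgraph isomorphic to `T` is `(r, n-2)`-colourable. -/
theorem stmt19 {β : Type} [Fintype β] (T : SimpleGraph β) (hT : T.IsTree)
    (n r : ℕ) (hn : n = Fintype.card β) (hn2 : 2 ≤ n) (hr : 1 ≤ r)
    (hrad : ∃ v : β, (∀ u, T.dist v u ≤ r) ∧ ∀ w : β, ∃ u, r ≤ T.dist w u)
    {V : Type} [Fintype V] (G : SimpleGraph V)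
    (h : ¬ ContainsSubgraph G T) :
    DefColorable G r (n - 2) := by
  classical
  obtain ⟨root, hroot, -⟩ := hrad
  subst hn
  have hempty : ∀ v, v ∉ richSet G (Fintype.card β - 1) r := by
    intro v₀ hv₀
    obtain ⟨S, f, hcard, -, hinj, hadj, -, -⟩ :=
      exists_partial_embedding hT hroot hv₀ (Fintype.card β - 1) (by omega)
    have hS : S = Finset.univ := by
      rw [← Finset.card_eq_iff_eq_univ]
      omega
    subst hS
    exact h ⟨⟨f, fun {a b} hab => hadj a (Finset.mem_univ a) b (Finset.mem_univ b) hab⟩,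
      fun a b hab => hinj (Finset.mem_coe.2 (Finset.mem_univ a))
        (Finset.mem_coe.2 (Finset.mem_univ b)) hab⟩
  have hcol : ∀ v, ∃ i : Fin r, v ∈ richSet G (Fintype.card β - 1) i ∧
      v ∉ richSet G (Fintype.card β - 1) (i + 1) := by
    intro v
    by_contra! hcon
    have hall : ∀ i, i ≤ r → v ∈ richSet G (Fintype.card β - 1) i := by
      intro i
      induction i with
      | zero => exact fun _ => Set.mem_univ v
      | succ i ih => exact fun hi => hcon ⟨i, hi⟩ (ih (by omega))
    exact hempty v (hall r le_rfl)
  choose c hc hc' using hcol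
  refine ⟨c, fun v => ?_⟩
  have hlt : {w | G.Adj v w ∧ w ∈ richSet G (Fintype.card β - 1) (c v)}.ncard
      < Fintype.card β - 1 := not_le.1 (hc' v)
  have hle : {w | G.Adj v w ∧ c w = c v}.ncard
      ≤ {w | G.Adj v w ∧ w ∈ richSet G (Fintype.card β - 1) (c v)}.ncard :=
    Set.ncard_le_ncard (fun w hw => ⟨hw.1, hw.2 ▸ hc w⟩)
  omega
end
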